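/- arXiv:1008.3931 — 3 statements merged into one kernel-verified Lean document; each statement's English description precedes it below -/
import Mathlib

section
/- Let R be a smooth function on a neighborhood of the origin in ℝ² with nonvanishing Taylor series, R(0,0) = 0 and ∇R(0,0) = (0,0), which is in generic adapted coordinates, and set d* = max(2, d(R)). Let e be a compact edge of N(R) lying entirely in the closed half-plane {(t₁,t₂) : t₂ ≥ t₁}. If there exists y₀ ≠ 0 such that R_e(1,y₀) ≠ 0 and d/dy[R_e(1,y)] has a zero of order greater than d* − 1 at y₀, then e has slope −1 and the upper vertex of e lies on the t₂-axis. -/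
open MeasureTheory Set Filter Topology

noncomputable section

/-- Iterated partial derivative `∂ₓᵃ ∂ᵧᵇ R` at `(x, y)`. -/
def pderiv2 (R : ℝ → ℝ → ℝ) (a b : ℕ) (x y : ℝ) : ℝ :=
  iteratedDeriv a (fun x' => iteratedDeriv b (fun y' => R x' y') y) x

/-- Taylor coefficient `R_{ab} = ∂ₓᵃ ∂ᵧᵇ R(0,0) / (a! b!)`. -/
def tcoeff (R : ℝ → ℝ → ℝ) (a b : ℕ) : ℝ :=
  pderiv2 R a b 0 0 / (Nat.factorial a * Nat.factorial b)

/-- The support of the Taylor series of `R` at the origin. -/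
def tsupp (R : ℝ → ℝ → ℝ) : Set (ℕ × ℕ) := {p | tcoeff R p.1 p.2 ≠ 0}

/-- The Newton polygon of `R`. -/
def newtonPolygon (R : ℝ → ℝ → ℝ) : Set (ℝ × ℝ) :=
  convexHull ℝ (⋃ p ∈ tsupp R, {q : ℝ × ℝ | (p.1 : ℝ) ≤ q.1 ∧ (p.2 : ℝ) ≤ q.2})

/-- The Newton distance of `R`. -/
def newtonDist (R : ℝ → ℝ → ℝ) : ℝ := sInf {t : ℝ | (t, t) ∈ newtonPolygon R}

/-- `e` is a compact edge of `N(R)` of slope `-1/M` (with `M > 0`): it is the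
(one-dimensional, compact) face of the Newton polygon cut out by a supporting line
`t₁ + M t₂ = c`. -/
def IsCompactEdge (R : ℝ → ℝ → ℝ) (M : ℝ) (e : Set (ℝ × ℝ)) : Prop :=
  0 < M ∧ ∃ c : ℝ, (∀ q ∈ newtonPolygon R, c ≤ q.1 + M * q.2) ∧
    e = {q ∈ newtonPolygon R | q.1 + M * q.2 = c} ∧
    ∃ v w : ℝ × ℝ, v ≠ w ∧ e = segment ℝ v w

/-- The edge polynomial `R_e(x,y) = Σ_{(a,b) ∈ e ∩ supp R} R_{ab} x^a y^b`. -/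
def edgePoly (R : ℝ → ℝ → ℝ) (e : Set (ℝ × ℝ)) (x y : ℝ) : ℝ :=
  ∑' p : ℕ × ℕ,
    Set.indicator {p : ℕ × ℕ | ((p.1 : ℝ), (p.2 : ℝ)) ∈ e}
      (fun p => tcoeff R p.1 p.2 * x ^ p.1 * y ^ p.2) p

/-- `p` has a zero of order exactly `m` at `y₀`. -/
def ZeroOfOrder (p : ℝ → ℝ) (m : ℕ) (y₀ : ℝ) : Prop :=
  (∀ j < m, iteratedDeriv j p y₀ = 0) ∧ iteratedDeriv m p y₀ ≠ 0

/-- `R` is in nonadapted coordinates: the bisectrix meets the interior of a compact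
edge `e` such that `R_e(1, ⬝)` has a real zero of order greater than `d(R)`. -/
def IsNonadapted (R : ℝ → ℝ → ℝ) : Prop :=
  ∃ (M : ℝ) (e : Set (ℝ × ℝ)) (v w : ℝ × ℝ), IsCompactEdge R M e ∧ v ≠ w ∧
    e = segment ℝ v w ∧ (∃ t : ℝ, (t, t) ∈ openSegment ℝ v w) ∧
    ∃ (y₀ : ℝ) (m : ℕ), newtonDist R < (m : ℝ) ∧
      ZeroOfOrder (fun y => edgePoly R e 1 y) m y₀

/-- `R` is in generic adapted coordinates: adapted coordinates, every compact edge has slope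
at least `-1`, and the Newton polygon meets the `t₂`-axis. -/
def GenericAdapted (R : ℝ → ℝ → ℝ) : Prop :=
  ¬ IsNonadapted R ∧ (∀ M e, IsCompactEdge R M e → 1 ≤ M) ∧
    ∃ t : ℝ, ((0 : ℝ), t) ∈ newtonPolygon R

/-- `α_M(R) = min {a + M b : (a,b) ∈ supp R}`. -/
def alphaM (R : ℝ → ℝ → ℝ) (M : ℝ) : ℝ :=
  sInf {t : ℝ | ∃ p ∈ tsupp R, t = (p.1 : ℝ) + M * p.2}

/-- `R_M`, the sum of the terms of the Taylor series of `R` of minimal `M`-weighted degree. -/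
def RMpart (R : ℝ → ℝ → ℝ) (M : ℝ) (x y : ℝ) : ℝ :=
  ∑' p : ℕ × ℕ,
    Set.indicator {p : ℕ × ℕ | p ∈ tsupp R ∧ (p.1 : ℝ) + M * p.2 = alphaM R M}
      (fun p => tcoeff R p.1 p.2 * x ^ p.1 * y ^ p.2) p

/-- The Hessian determinant of `f`. -/
def hessDet (f : ℝ → ℝ → ℝ) (x y : ℝ) : ℝ :=
  pderiv2 f 2 0 x y * pderiv2 f 0 2 x y - (pderiv2 f 1 1 x y) ^ 2

/-- `F*(x,y) = (Σ_{(a,b) vertex of N(F)} x^{2a} y^{2b})^{1/2}`. -/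
def vertexFn (F : ℝ → ℝ → ℝ) (x y : ℝ) : ℝ :=
  Real.sqrt (∑' p : ℕ × ℕ,
    Set.indicator
      {p : ℕ × ℕ | ((p.1 : ℝ), (p.2 : ℝ)) ∈ (newtonPolygon F).extremePoints ℝ}
      (fun p => x ^ (2 * p.1) * y ^ (2 * p.2)) p)

/-!
The endpoints of a compact edge `e` are extreme points of `N(R)`, hence exponents of monomials of
`R`. So `e` runs from a support point `(a, b)` to a support point `(a', b')` with `b < b'`, and
`R_e(1, ⬝)` involves only powers from `y ^ b` to `y ^ b'`. A zero of order `m` of its derivative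
away from the origin therefore forces `b + m ≤ b'`. Since `(a, b)` is not below the bisectrix and
lies on a supporting line of `N(R)`, we have `a ≤ d(R) < m + 1`, so `a ≤ m` by integrality. If `e`
has slope `-1 / M` with `1 ≤ M`, then `a ≤ b' - b ≤ M * (b' - b) = a - a'`, so `a' = 0` and all
these inequalities are equalities; hence `M = 1`.
-/

section Convexity

variable {𝕜 E : Type*} [Field 𝕜] [LinearOrder 𝕜] [IsStrictOrderedRing 𝕜] [AddCommGroup E]
  [Module 𝕜 E]

theorem left_mem_extremePoints_segment (v w : E) :
    v ∈ (segment 𝕜 v w).extremePoints 𝕜 := by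
  refine ⟨left_mem_segment 𝕜 v w, ?_⟩
  simp only [segment_eq_image']
  rintro _ ⟨s, ⟨hs, -⟩, rfl⟩ _ ⟨t, ⟨ht, -⟩, rfl⟩ ⟨a, b, ha, hb, hab, hv⟩
  have hcomb : (a * s + b * t) • (w - v) = 0 := by
    obtain rfl : b = 1 - a := by linear_combination hab
    linear_combination (norm := module) hv
  rcases smul_eq_zero.1 hcomb with hst | hwv
  · have has : a * s = 0 := by
      linarith [mul_nonneg ha.le hs, mul_nonneg hb.le ht]
    simp [(mul_eq_zero.1 has).resolve_left ha.ne']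
  · simp [hwv]

theorem right_mem_extremePoints_segment (v w : E) :
    w ∈ (segment 𝕜 v w).extremePoints 𝕜 :=
  segment_symm 𝕜 w v ▸ left_mem_extremePoints_segment w v

theorem isExtreme_setOf_eq_of_forall_le {A : Set E} (f : E →ₗ[𝕜] 𝕜) {c : 𝕜}
    (hc : ∀ x ∈ A, c ≤ f x) : IsExtreme 𝕜 A {x ∈ A | f x = c} := by
  refine ⟨sep_subset _ _, ?_⟩
  rintro x hx y hy _ ⟨-, hz⟩ ⟨a, b, ha, hb, hab, rfl⟩
  refine ⟨hx, le_antisymm ?_ (hc x hx)⟩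
  have hfz : a * f x + b * f y = c := by simpa using hz
  refine le_of_mul_le_mul_left ?_ ha
  linear_combination hfz + b * hc y hy - c * hab

end Convexity

section Polynomial

open Polynomial

variable {K : Type*} [CommRing K] [IsDomain K]

theorem sum_rootMultiplicity_le_natDegree (P : K[X]) (s : Finset K) :
    ∑ a ∈ s, P.rootMultiplicity a ≤ P.natDegree := by
  classical
  calc ∑ a ∈ s, P.rootMultiplicity a
      = ∑ a ∈ s, (P.roots.filter (· ∈ s)).count a :=
        Finset.sum_congr rfl fun a ha => by rw [Multiset.count_filter_of_pos ha, count_roots]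
    _ = (P.roots.filter (· ∈ s)).card :=
        Multiset.sum_count_eq_card fun _ ha => Multiset.of_mem_filter ha
    _ ≤ P.roots.card := Multiset.card_le_card (Multiset.filter_le _ _)
    _ ≤ P.natDegree := P.card_roots'

theorem rootMultiplicity_add_rootMultiplicity_derivative_le_natDegree (P : K[X]) {a b : K}
    (hab : a ≠ b) :
    P.rootMultiplicity a + (derivative P).rootMultiplicity b ≤ P.natDegree := by
  classical
  rcases eq_or_ne (derivative P) 0 with hP' | hP'
  · simpa [hP'] using sum_rootMultiplicity_le_natDegree P {a}
  · have hdeg : (derivative P).natDegree < P.natDegree :=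
      natDegree_derivative_lt fun h => hP' (derivative_of_natDegree_zero h)
    have hmult : P.rootMultiplicity a - 1 ≤ (derivative P).rootMultiplicity a :=
      rootMultiplicity_sub_one_le_derivative_rootMultiplicity_of_ne_zero P a hP'
    have hsum : (derivative P).rootMultiplicity a + (derivative P).rootMultiplicity b ≤
        (derivative P).natDegree := by
      simpa [Finset.sum_pair hab] using sum_rootMultiplicity_le_natDegree (derivative P) {a, b}
    lia

theorem iteratedDeriv_polynomial_eval {𝕜 : Type*} [NontriviallyNormedField 𝕜] (P : 𝕜[X]) (n : ℕ) :
    iteratedDeriv n (fun y => P.eval y) = fun y => (derivative^[n] P).eval y := by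
  induction n generalizing P with
  | zero => simp
  | succ n ih =>
    have hderiv : deriv (fun y => P.eval y) = fun y => (derivative P).eval y :=
      funext fun y => P.deriv
    rw [iteratedDeriv_succ', hderiv, ih, Function.iterate_succ_apply]

theorem le_rootMultiplicity_of_iteratedDeriv_eq_zero {𝕜 : Type*} [NontriviallyNormedField 𝕜]
    [CharZero 𝕜] {P : 𝕜[X]} (hP : P ≠ 0) {m : ℕ} {y : 𝕜}
    (h : ∀ j < m, iteratedDeriv j (fun x => P.eval x) y = 0) : m ≤ P.rootMultiplicity y := by
  rcases m with _ | m
  · exact Nat.zero_le _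
  · refine lt_rootMultiplicity_of_isRoot_iterate_derivative hP fun j hj => ?_
    simpa only [iteratedDeriv_polynomial_eval, IsRoot.def] using h j (Nat.lt_succ_of_le hj)

end Polynomial

/-- The exponent `(a, b)` of a monomial `x ^ a * y ^ b`, as a point of the plane that contains the
Newton polygon. -/
def expPoint (p : ℕ × ℕ) : ℝ × ℝ := ((p.1 : ℝ), (p.2 : ℝ))

section NewtonPolygon

variable {R : ℝ → ℝ → ℝ} {M c : ℝ}

theorem newtonPolygon_nonempty_iff : (newtonPolygon R).Nonempty ↔ (tsupp R).Nonempty := by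
  simp only [newtonPolygon, convexHull_nonempty_iff, nonempty_biUnion]
  exact ⟨fun ⟨p, hp, _⟩ => ⟨p, hp⟩, fun ⟨p, hp⟩ => ⟨p, hp, expPoint p, le_rfl, le_rfl⟩⟩

theorem extremePoints_newtonPolygon_subset :
    (newtonPolygon R).extremePoints ℝ ⊆ expPoint '' tsupp R := by
  intro x hx
  obtain ⟨p, hp, hpx⟩ := mem_iUnion₂.1 (extremePoints_convexHull_subset hx)
  have hmem : ∀ z : ℝ × ℝ, expPoint p ≤ z → z ∈ newtonPolygon R := fun z hz =>
    subset_convexHull ℝ _ (mem_biUnion hp hz)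
  have hpx : expPoint p ≤ x := hpx
  refine ⟨p, hp, hx.2 (hmem _ le_rfl) (hmem (x + (x - expPoint p)) ?_) ?_⟩
  · exact le_add_of_le_of_nonneg hpx (sub_nonneg.2 hpx)
  · refine ⟨1 / 2, 1 / 2, by norm_num, by norm_num, by norm_num, ?_⟩
    module

theorem div_le_newtonDist (hne : (newtonPolygon R).Nonempty) (hM : 0 < M)
    (hc : ∀ q ∈ newtonPolygon R, c ≤ q.1 + M * q.2) : c / (1 + M) ≤ newtonDist R := by
  obtain ⟨p, hp⟩ := newtonPolygon_nonempty_iff.1 hne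
  refine le_csInf ⟨max (p.1 : ℝ) p.2, ?_⟩ fun t ht => ?_
  · exact subset_convexHull ℝ _ (mem_biUnion hp ⟨le_max_left _ _, le_max_right _ _⟩)
  · rw [div_le_iff₀ (by positivity)]
    linarith [hc _ ht]

theorem snd_mem_Icc_of_expPoint_mem_segment {p q r : ℕ × ℕ} (hpq : p.2 ≤ q.2)
    (hr : expPoint r ∈ segment ℝ (expPoint p) (expPoint q)) : r.2 ∈ Icc p.2 q.2 := by
  have himage := image_segment ℝ (LinearMap.snd ℝ ℝ ℝ).toAffineMap (expPoint p) (expPoint q)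
  have hr₂ : (r.2 : ℝ) ∈ segment ℝ (p.2 : ℝ) q.2 := himage ▸ mem_image_of_mem _ hr
  rw [segment_eq_Icc (Nat.cast_le.2 hpq)] at hr₂
  exact ⟨Nat.cast_le.1 hr₂.1, Nat.cast_le.1 hr₂.2⟩

theorem finite_setOf_weight_eq (hM : 0 < M) (c : ℝ) :
    {p : ℕ × ℕ | (p.1 : ℝ) + M * p.2 = c}.Finite := by
  refine ((finite_Iic ⌊c⌋₊).prod (finite_Iic ⌊c / M⌋₊)).subset ?_
  rintro ⟨a, b⟩ (h : (a : ℝ) + M * b = c)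
  have hb : 0 ≤ M * b := by positivity
  refine ⟨Nat.le_floor (by linarith), Nat.le_floor ?_⟩
  rw [le_div_iff₀ hM]
  linarith [a.cast_nonneg (α := ℝ)]

end NewtonPolygon

/-- The edge polynomial `R_e(1, y)` as a formal polynomial in `y`. It is `0` by convention if `e`
contains infinitely many exponents of monomials of `R`. -/
def edgePolynomial (R : ℝ → ℝ → ℝ) (e : Set (ℝ × ℝ)) : Polynomial ℝ :=
  ∑ᶠ r ∈ expPoint ⁻¹' e, Polynomial.monomial r.2 (tcoeff R r.1 r.2)

namespace IsCompactEdge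

variable {R : ℝ → ℝ → ℝ} {M : ℝ} {e : Set (ℝ × ℝ)}

theorem nonempty (he : IsCompactEdge R M e) : e.Nonempty := by
  obtain ⟨-, -, -, -, v, w, -, rfl⟩ := he
  exact ⟨v, left_mem_segment ℝ v w⟩

theorem isExtreme (he : IsCompactEdge R M e) : IsExtreme ℝ (newtonPolygon R) e := by
  obtain ⟨-, c, hc, rfl, -⟩ := he
  exact isExtreme_setOf_eq_of_forall_le (LinearMap.fst ℝ ℝ ℝ + M • LinearMap.snd ℝ ℝ ℝ) hc

theorem weight_eq (he : IsCompactEdge R M e) {v w : ℝ × ℝ} (hv : v ∈ e) (hw : w ∈ e) :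
    v.1 + M * v.2 = w.1 + M * w.2 := by
  obtain ⟨-, c, -, rfl, -⟩ := he
  exact hv.2.trans hw.2.symm

theorem fst_le_newtonDist (he : IsCompactEdge R M e) {v : ℝ × ℝ} (hv : v ∈ e) (hle : v.1 ≤ v.2) :
    v.1 ≤ newtonDist R := by
  have hne : (newtonPolygon R).Nonempty := he.nonempty.mono he.isExtreme.subset
  obtain ⟨hM, c, hc, rfl, -⟩ := he
  calc v.1 ≤ c / (1 + M) := by
        rw [le_div_iff₀ (by positivity)]
        linarith [hv.2, mul_le_mul_of_nonneg_left hle hM.le]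
    _ ≤ newtonDist R := div_le_newtonDist hne hM hc

theorem eq_of_snd_eq (he : IsCompactEdge R M e) {p q : ℕ × ℕ} (hp : expPoint p ∈ e)
    (hq : expPoint q ∈ e) (h : p.2 = q.2) : p = q := by
  have hweight : (p.1 : ℝ) + M * p.2 = q.1 + M * q.2 := he.weight_eq hp hq
  rw [h] at hweight
  exact Prod.ext (Nat.cast_injective (add_right_cancel hweight)) h

theorem exists_vertices (he : IsCompactEdge R M e) :
    ∃ p ∈ tsupp R, ∃ q ∈ tsupp R, p.2 < q.2 ∧ e = segment ℝ (expPoint p) (expPoint q) := by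
  obtain ⟨-, -, -, -, v, w, hvw, hseg⟩ := id he
  have hext : (segment ℝ v w).extremePoints ℝ ⊆ expPoint '' tsupp R :=
    hseg ▸ he.isExtreme.extremePoints_subset_extremePoints.trans extremePoints_newtonPolygon_subset
  obtain ⟨p, hp, rfl⟩ := hext (left_mem_extremePoints_segment v w)
  obtain ⟨q, hq, rfl⟩ := hext (right_mem_extremePoints_segment _ w)
  have hpe : expPoint p ∈ e := hseg ▸ left_mem_segment ℝ _ _
  have hqe : expPoint q ∈ e := hseg ▸ right_mem_segment ℝ _ _
  rcases lt_trichotomy p.2 q.2 with hlt | heq | hgt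
  · exact ⟨p, hp, q, hq, hlt, hseg⟩
  · exact absurd (congrArg expPoint (he.eq_of_snd_eq hpe hqe heq)) hvw
  · exact ⟨q, hq, p, hp, hgt, hseg.trans (segment_symm ℝ _ _)⟩

theorem finite_preimage_expPoint (he : IsCompactEdge R M e) : (expPoint ⁻¹' e).Finite := by
  obtain ⟨hM, c, -, rfl, -⟩ := he
  exact (finite_setOf_weight_eq hM c).subset fun _ hr => hr.2

theorem edgePoly_one_eq (he : IsCompactEdge R M e) :
    edgePoly R e 1 = fun y => (edgePolynomial R e).eval y := by
  funext y
  have hfin := he.finite_preimage_expPoint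
  calc edgePoly R e 1 y
      = ∑ᶠ r ∈ expPoint ⁻¹' e, tcoeff R r.1 r.2 * 1 ^ r.1 * y ^ r.2 := by
        rw [finsum_mem_def]
        exact tsum_eq_finsum (hfin.subset support_indicator_subset)
    _ = (edgePolynomial R e).eval y := by
        rw [edgePolynomial, ← Polynomial.coe_evalRingHom]
        refine (finsum_congr fun r => ?_).trans
          ((Polynomial.evalRingHom y).toAddMonoidHom.map_finsum_mem _ hfin).symm
        simp

theorem coeff_edgePolynomial (he : IsCompactEdge R M e) (b : ℕ) :
    (edgePolynomial R e).coeff b =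
      ∑ᶠ r ∈ expPoint ⁻¹' e, if r.2 = b then tcoeff R r.1 r.2 else 0 := by
  refine ((Polynomial.lcoeff ℝ b).toAddMonoidHom.map_finsum_mem _
    he.finite_preimage_expPoint).trans ?_
  simp [Polynomial.coeff_monomial]

theorem coeff_snd_edgePolynomial (he : IsCompactEdge R M e) {r : ℕ × ℕ} (hr : expPoint r ∈ e) :
    (edgePolynomial R e).coeff r.2 = tcoeff R r.1 r.2 := by
  rw [he.coeff_edgePolynomial, finsum_eq_single _ r fun s hs => ?_]
  · simp [hr]
  · by_cases hse : expPoint s ∈ e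
    · simp [mt (he.eq_of_snd_eq hse hr) hs]
    · simp [hse]

theorem coeff_edgePolynomial_eq_zero (he : IsCompactEdge R M e) {b : ℕ}
    (hb : ∀ r : ℕ × ℕ, expPoint r ∈ e → r.2 ≠ b) : (edgePolynomial R e).coeff b = 0 := by
  rw [he.coeff_edgePolynomial]
  exact finsum_mem_eq_zero_of_forall_eq_zero fun r hr => if_neg (hb r hr)

theorem natDegree_edgePolynomial (he : IsCompactEdge R M e) {p q : ℕ × ℕ} (hq : q ∈ tsupp R)
    (hpq : p.2 ≤ q.2) (hseg : e = segment ℝ (expPoint p) (expPoint q)) :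
    (edgePolynomial R e).natDegree = q.2 := by
  refine Polynomial.natDegree_eq_of_le_of_coeff_ne_zero ?_ ?_
  · refine Polynomial.natDegree_le_iff_coeff_eq_zero.2 fun b hb => ?_
    refine he.coeff_edgePolynomial_eq_zero fun r hr => ?_
    exact ((snd_mem_Icc_of_expPoint_mem_segment hpq (hseg ▸ hr)).2.trans_lt hb).ne
  · rw [he.coeff_snd_edgePolynomial (hseg ▸ right_mem_segment ℝ _ _)]
    exact hq

theorem snd_le_natTrailingDegree_edgePolynomial (he : IsCompactEdge R M e) {p q : ℕ × ℕ}
    (hpq : p.2 ≤ q.2) (hseg : e = segment ℝ (expPoint p) (expPoint q))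
    (hne : edgePolynomial R e ≠ 0) : p.2 ≤ (edgePolynomial R e).natTrailingDegree := by
  refine Polynomial.le_natTrailingDegree hne fun b hb => ?_
  refine he.coeff_edgePolynomial_eq_zero fun r hr => ?_
  exact (hb.trans_le (snd_mem_Icc_of_expPoint_mem_segment hpq (hseg ▸ hr)).1).ne'

theorem snd_add_le_snd_of_iteratedDeriv_eq_zero (he : IsCompactEdge R M e) {p q : ℕ × ℕ}
    (hq : q ∈ tsupp R) (hpq : p.2 < q.2) (hseg : e = segment ℝ (expPoint p) (expPoint q))
    {y₀ : ℝ} (hy₀ : y₀ ≠ 0) {m : ℕ}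
    (hzero : ∀ j < m, iteratedDeriv j (deriv (edgePoly R e 1)) y₀ = 0) : p.2 + m ≤ q.2 := by
  set P := edgePolynomial R e
  have hdeg : P.natDegree = q.2 := he.natDegree_edgePolynomial hq hpq.le hseg
  have hP' : Polynomial.derivative P ≠ 0 := mt Polynomial.derivative_eq_zero.1 (by lia)
  have hP : P ≠ 0 := fun h => hP' (by rw [h, map_zero])
  have hderiv : deriv (edgePoly R e 1) = fun y => (Polynomial.derivative P).eval y :=
    funext fun y => by rw [he.edgePoly_one_eq, Polynomial.deriv]
  calc p.2 + m
      ≤ P.rootMultiplicity 0 + (Polynomial.derivative P).rootMultiplicity y₀ := by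
        gcongr
        · rw [Polynomial.rootMultiplicity_eq_natTrailingDegree']
          exact he.snd_le_natTrailingDegree_edgePolynomial hpq.le hseg hP
        · exact le_rootMultiplicity_of_iteratedDeriv_eq_zero hP' (hderiv ▸ hzero)
    _ ≤ P.natDegree :=
        rootMultiplicity_add_rootMultiplicity_derivative_le_natDegree P hy₀.symm
    _ = q.2 := hdeg

end IsCompactEdge

theorem stmt_1_general {R : ℝ → ℝ → ℝ}
    (hsm : ContDiffAt ℝ (⊤ : ℕ∞) (fun p : ℝ × ℝ => R p.1 p.2) (0, 0))
    {M : ℝ} (hM : 1 ≤ M) {e : Set (ℝ × ℝ)} (he : IsCompactEdge R M e)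
    (habove : e ⊆ {q : ℝ × ℝ | q.1 ≤ q.2}) {y₀ : ℝ} (hy₀ : y₀ ≠ 0)
    {m : ℕ} (hm : newtonDist R - 1 < m)
    (hzero : ∀ j < m, iteratedDeriv j (deriv (edgePoly R e 1)) y₀ = 0) :
    M = 1 ∧ ∃ v w : ℝ × ℝ, v ≠ w ∧ e = segment ℝ v w ∧ v.2 < w.2 ∧ w.1 = 0 := by
  obtain ⟨p, -, q, hq, hpq, hseg⟩ := he.exists_vertices
  have hpe : expPoint p ∈ e := hseg ▸ left_mem_segment ℝ _ _
  have hqe : expPoint q ∈ e := hseg ▸ right_mem_segment ℝ _ _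
  have hline : (p.1 : ℝ) + M * p.2 = q.1 + M * q.2 := he.weight_eq hpe hqe
  have hdist : (p.1 : ℝ) ≤ newtonDist R := he.fst_le_newtonDist hpe (habove hpe)
  have hpm : p.1 ≤ m := Nat.lt_succ_iff.1 (by exact_mod_cast (by linarith : (p.1 : ℝ) < m + 1))
  have horder : p.2 + m ≤ q.2 := he.snd_add_le_snd_of_iteratedDeriv_eq_zero hq hpq hseg hy₀ hzero
  have hle : (p.1 : ℝ) ≤ q.2 - p.2 := by
    rw [le_sub_iff_add_le]
    exact_mod_cast (by lia : p.1 + p.2 ≤ q.2)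
  have hpos : (0 : ℝ) < q.2 - p.2 := sub_pos.2 (Nat.cast_lt.2 hpq)
  have hheight : (q.2 : ℝ) - p.2 ≤ M * (q.2 - p.2) := le_mul_of_one_le_left hpos.le hM
  have hq₀ : (q.1 : ℝ) = 0 := le_antisymm (by linarith) q.1.cast_nonneg
  have hM_eq : M * ((q.2 : ℝ) - p.2) = 1 * (q.2 - p.2) := by linarith
  exact ⟨mul_right_cancel₀ hpos.ne' hM_eq, expPoint p, expPoint q,
    ne_of_apply_ne Prod.snd (sub_pos.1 hpos).ne, hseg, sub_pos.1 hpos, hq₀⟩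

/-- Lemma 2.1: if `R` is in generic adapted coordinates and `e` is a compact edge of `N(R)`
lying on or above the bisectrix such that `∂_y R_e(1,y)` has a zero of order greater than
`d* - 1` at some `y₀ ≠ 0` with `R_e(1, y₀) ≠ 0`, then `e` has slope `-1` and its upper vertex
lies on the `t₂`-axis. -/
theorem stmt_1 (R : ℝ → ℝ → ℝ) (U₀ : Set (ℝ × ℝ)) (hU₀ : U₀ ∈ 𝓝 ((0 : ℝ), (0 : ℝ)))
    (hsm : ContDiffOn ℝ (⊤ : ℕ∞) (fun p : ℝ × ℝ => R p.1 p.2) U₀)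
    (hts : (tsupp R).Nonempty)
    (h0 : R 0 0 = 0) (hgrad : fderiv ℝ (fun p : ℝ × ℝ => R p.1 p.2) (0, 0) = 0)
    (hga : GenericAdapted R)
    (M : ℝ) (e : Set (ℝ × ℝ)) (he : IsCompactEdge R M e)
    (habove : e ⊆ {q : ℝ × ℝ | q.1 ≤ q.2})
    (y₀ : ℝ) (hy₀ : y₀ ≠ 0) (hRe : edgePoly R e 1 y₀ ≠ 0)
    (m : ℕ) (hm : max 2 (newtonDist R) - 1 < (m : ℝ))
    (hzero : ZeroOfOrder (fun y => deriv (fun y' => edgePoly R e 1 y') y) m y₀) :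
    M = 1 ∧ ∃ v w : ℝ × ℝ, v ≠ w ∧ e = segment ℝ v w ∧ v.2 < w.2 ∧ w.1 = 0 := by
  exact stmt_1_general (hsm.contDiffAt hU₀) (hga.2.1 M e he) he habove hy₀
    ((sub_le_sub_right (le_max_right _ _) 1).trans_lt hm) hzero.1

end
end

section
/- Let R be a smooth function on a neighborhood of the origin in ℝ² with R(0,0) = 0 and nonvanishing Taylor series. Let (c,d) ∈ supp(R) and let M₁ > M₂ > 0 be such that a + M₁ b ≥ c + M₁ d and a + M₂ b ≥ c + M₂ d for every (a,b) ∈ supp(R) (so (c,d) is the vertex of N(R) at which the supporting lines of slopes −1/M₁ and −1/M₂ touch N(R)). Then there exist N > 0 and a neighborhood U of the origin such that for all (x,y) ∈ U with N|x|^{M₁} < |y| < (1/N)|x|^{M₂}, one has (1/2)|R_{cd}| |x|^c |y|^d < |R(x,y)| < 2 |R_{cd}| |x|^c |y|^d. -/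
open MeasureTheory Set Filter Topology

noncomputable section

/-!
Write `X = |x|`, `Y = |y|`, and let `(x, y)` tend to the origin so that `X ^ M₁ / Y` and
`Y / X ^ M₂` tend to `0`. If `b < d`, trading `d - b` factors `Y` for `X ^ M₁` and using that
`(a, b)` lies above the line of slope `-1 / M₁` gives `X ^ a * Y ^ b = o(X ^ c * Y ^ d)`; if
`b > d` the same works with `M₂`, and if `b = d` then `a > c`. So every other monomial of the
Taylor expansion is negligible against the vertex monomial. A Taylor remainder `O(X ^ K + Y ^ K)`
is negligible as well, since `(K, 0)` and `(0, K)` lie above both lines for large `K`. Hence `R` is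
asymptotically equivalent to its vertex monomial.
-/

open Asymptotics Function
open scoped ContDiff

section TaylorExpansion

theorem contDiffAt_iteratedDeriv_snd {𝕜 E F : Type*} [NontriviallyNormedField 𝕜]
    [NormedAddCommGroup E] [NormedSpace 𝕜 E] [NormedAddCommGroup F] [NormedSpace 𝕜 F]
    {f : E → 𝕜 → F} {p : E × 𝕜} {m : ℕ∞ω} {n : ℕ} (hf : ContDiffAt 𝕜 (m + n) (uncurry f) p) :
    ContDiffAt 𝕜 m (fun q : E × 𝕜 => iteratedDeriv n (f q.1) q.2) p := by
  induction n generalizing m with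
  | zero => simpa [uncurry_def] using hf
  | succ n ih =>
    have ih_add_one : ContDiffAt 𝕜 (m + 1) (fun q : E × 𝕜 => iteratedDeriv n (f q.1) q.2) p := by
      refine ih ?_
      rwa [add_assoc, add_comm 1, ← Nat.cast_one, ← Nat.cast_add]
    have hfderiv : ContDiffAt 𝕜 m
        (fun q : E × 𝕜 => fderiv 𝕜 (iteratedDeriv n (f q.1)) q.2) p :=
      ContDiffAt.fderiv (n := m + 1) (f := fun q : E × 𝕜 => iteratedDeriv n (f q.1))
        (ih_add_one.comp (p, p.2) (g := fun q : E × 𝕜 => iteratedDeriv n (f q.1) q.2)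
          (f := fun q : (E × 𝕜) × 𝕜 => (q.1.1, q.2)) (by fun_prop))
        contDiffAt_snd le_rfl
    simpa only [iteratedDeriv_succ, ← fderiv_apply_one_eq_deriv] using
      hfderiv.clm_apply contDiffAt_const

theorem taylorWithinEval_eq_sum_iteratedDeriv {f : ℝ → ℝ} {n : ℕ} {s : Set ℝ} {x₀ : ℝ}
    (hs : UniqueDiffOn ℝ s) (hx₀ : x₀ ∈ s) (hf : ContDiffAt ℝ n f x₀) (x : ℝ) :
    taylorWithinEval f n s x₀ x =
      ∑ k ∈ Finset.range (n + 1), iteratedDeriv k f x₀ / k.factorial * (x - x₀) ^ k := by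
  rw [taylor_within_apply]
  refine Finset.sum_congr rfl fun k hk => ?_
  have hkn : (k : ℕ∞ω) ≤ n := by exact_mod_cast Finset.mem_range_succ_iff.1 hk
  rw [iteratedDerivWithin_eq_iteratedDeriv hs (hf.of_le hkn) hx₀, smul_eq_mul]
  ring

theorem abs_sub_taylor_sum_le {f : ℝ → ℝ} {n : ℕ} {x₀ x C : ℝ}
    (hf : ∀ t ∈ uIcc x₀ x, ContDiffAt ℝ n f t) (hC : ∀ t ∈ uIcc x₀ x, |iteratedDeriv n f t| ≤ C) :
    |f x - ∑ k ∈ Finset.range n, iteratedDeriv k f x₀ / k.factorial * (x - x₀) ^ k| ≤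
      C * |x - x₀| ^ n / n.factorial := by
  obtain _ | n := n
  · simpa using hC x right_mem_uIcc
  obtain rfl | hx := eq_or_ne x₀ x
  · simp [Finset.sum_range_succ']
  obtain ⟨t, ht, hremainder⟩ := taylor_mean_remainder_lagrange_iteratedDeriv hx
    fun t ht => (hf t ht).contDiffWithinAt
  have hf_n : ContDiffAt ℝ n f x₀ := (hf x₀ left_mem_uIcc).of_le (by exact_mod_cast n.le_succ)
  rw [← taylorWithinEval_eq_sum_iteratedDeriv (uniqueDiffOn_uIcc hx) left_mem_uIcc hf_n,
    hremainder, abs_div, abs_mul, abs_pow, Nat.abs_cast]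
  gcongr
  exact hC t (uIoo_subset_uIcc_self ht)

theorem eventually_forall_mem_uIcc {E T : Type*} [TopologicalSpace E] [LinearOrder T]
    [TopologicalSpace T] [OrderTopology T] {e : E} {t₀ : T} {P : E × T → Prop}
    (h : ∀ᶠ p in 𝓝 (e, t₀), P p) :
    ∀ᶠ p in 𝓝 (e, t₀), ∀ t ∈ uIcc t₀ p.2, P (p.1, t) := by
  rw [nhds_prod_eq] at h ⊢
  obtain ⟨Q₁, hQ₁, Q₂, hQ₂, hP⟩ := eventually_prod_iff.1 h
  have hQ₂_uIcc : ∀ᶠ t in 𝓝 t₀, ∀ s ∈ uIcc t₀ t, Q₂ s :=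
    (tendsto_const_nhds.uIcc tendsto_id).eventually (eventually_smallSets_forall.2 hQ₂)
  filter_upwards [hQ₁.prod_mk hQ₂_uIcc] with p hp t ht
  exact hP hp.1 (hp.2 t ht)

variable {E : Type*} [NormedAddCommGroup E] [NormedSpace ℝ E]

theorem isBigO_sub_taylor_sum_snd {f : E → ℝ → ℝ} {e : E} {t₀ : ℝ} {n : ℕ}
    (hf : ContDiffAt ℝ n (uncurry f) (e, t₀)) :
    (fun p : E × ℝ => f p.1 p.2 -
        ∑ k ∈ Finset.range n, iteratedDeriv k (f p.1) t₀ / k.factorial * (p.2 - t₀) ^ k)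
      =O[𝓝 (e, t₀)] fun p => (p.2 - t₀) ^ n := by
  have hcont : ContinuousAt (fun p : E × ℝ => iteratedDeriv n (f p.1) p.2) (e, t₀) :=
    (contDiffAt_iteratedDeriv_snd (m := 0) (by simpa using hf)).continuousAt
  obtain ⟨C, hC⟩ := hcont.norm.isBoundedUnder_le
  have hsmooth := hf.eventually (by simp)
  refine IsBigO.of_bound (C / n.factorial) ?_
  filter_upwards [eventually_forall_mem_uIcc (eventually_map.1 hC),
    eventually_forall_mem_uIcc hsmooth] with p hbound hsmooth_p
  have hslice : ∀ t ∈ uIcc t₀ p.2, ContDiffAt ℝ n (f p.1) t := fun t ht =>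
    (hsmooth_p t ht).comp t (f := fun t : ℝ => (p.1, t)) (by fun_prop)
  rw [norm_pow, div_mul_eq_mul_div]
  exact abs_sub_taylor_sum_le hslice hbound

theorem isBigO_sub_taylor_sum {f : ℝ → ℝ} {t₀ : ℝ} {n : ℕ} (hf : ContDiffAt ℝ n f t₀) :
    (fun t => f t - ∑ k ∈ Finset.range n, iteratedDeriv k f t₀ / k.factorial * (t - t₀) ^ k)
      =O[𝓝 t₀] fun t => (t - t₀) ^ n :=
  (isBigO_sub_taylor_sum_snd (f := fun _ : ℝ => f) (e := 0)
    (hf.comp (0, t₀) contDiffAt_snd)).comp_tendsto (Continuous.prodMk_right 0).continuousAt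

theorem sub_sum_tcoeff_eq (R : ℝ → ℝ → ℝ) (K : ℕ) (x y : ℝ) :
    R x y - ∑ q ∈ Finset.range K ×ˢ Finset.range K, tcoeff R q.1 q.2 * (x ^ q.1 * y ^ q.2) =
      (R x y - ∑ b ∈ Finset.range K, iteratedDeriv b (R x) 0 / b.factorial * y ^ b) +
      ∑ b ∈ Finset.range K, (iteratedDeriv b (R x) 0 -
        ∑ a ∈ Finset.range K, pderiv2 R a b 0 0 / a.factorial * x ^ a) *
          (y ^ b / b.factorial) := by
  rw [Finset.sum_product_right, sub_add, ← Finset.sum_sub_distrib]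
  congr 1
  refine Finset.sum_congr rfl fun b _ => ?_
  rw [sub_mul, Finset.sum_mul, div_mul_eq_mul_div, mul_div_assoc, sub_sub_cancel]
  refine Finset.sum_congr rfl fun a _ => ?_
  rw [tcoeff]
  field

theorem isBigO_iteratedDeriv_snd_sub_sum_pderiv2 {R : ℝ → ℝ → ℝ} {K b : ℕ}
    (hR : ContDiffAt ℝ (K + b : ℕ) (uncurry R) (0, 0)) :
    (fun x => iteratedDeriv b (R x) 0 -
        ∑ a ∈ Finset.range K, pderiv2 R a b 0 0 / a.factorial * x ^ a) =O[𝓝 0] fun x => x ^ K := by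
  have hslice : ContDiffAt ℝ K (fun x => iteratedDeriv b (R x) 0) 0 :=
    (contDiffAt_iteratedDeriv_snd (p := (0, 0)) (by exact_mod_cast hR)).comp (0 : ℝ)
      (f := fun x : ℝ => (x, (0 : ℝ))) (by fun_prop)
  simpa only [sub_zero, pderiv2] using isBigO_sub_taylor_sum hslice

theorem isBigO_sub_sum_tcoeff {R : ℝ → ℝ → ℝ} {K : ℕ}
    (hR : ContDiffAt ℝ (K + K : ℕ) (uncurry R) (0, 0)) :
    (fun p : ℝ × ℝ => R p.1 p.2 -
        ∑ q ∈ Finset.range K ×ˢ Finset.range K, tcoeff R q.1 q.2 * (p.1 ^ q.1 * p.2 ^ q.2))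
      =O[𝓝 (0, 0)] fun p => |p.1| ^ K + |p.2| ^ K := by
  have fst_pow_isBigO : (fun p : ℝ × ℝ => p.1 ^ K) =O[𝓝 (0, 0)] fun p => |p.1| ^ K + |p.2| ^ K :=
    .of_norm_le fun p => by
      rw [norm_pow, Real.norm_eq_abs]
      exact le_add_of_nonneg_right (by positivity)
  have snd_pow_isBigO : (fun p : ℝ × ℝ => p.2 ^ K) =O[𝓝 (0, 0)] fun p => |p.1| ^ K + |p.2| ^ K :=
    .of_norm_le fun p => by
      rw [norm_pow, Real.norm_eq_abs]
      exact le_add_of_nonneg_left (by positivity)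
  have hexpand_snd : (fun p : ℝ × ℝ => R p.1 p.2 -
      ∑ b ∈ Finset.range K, iteratedDeriv b (R p.1) 0 / b.factorial * p.2 ^ b)
        =O[𝓝 (0, 0)] fun p => p.2 ^ K := by
    have hR_K : ContDiffAt ℝ K (uncurry R) (0, 0) := hR.of_le (by exact_mod_cast K.le_add_left K)
    simpa only [sub_zero] using isBigO_sub_taylor_sum_snd hR_K
  have hexpand_fst : ∀ b ∈ Finset.range K, (fun p : ℝ × ℝ => (iteratedDeriv b (R p.1) 0 -
      ∑ a ∈ Finset.range K, pderiv2 R a b 0 0 / a.factorial * p.1 ^ a) * (p.2 ^ b / b.factorial))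
        =O[𝓝 (0, 0)] fun p => p.1 ^ K := by
    intro b hb
    have hR_b : ContDiffAt ℝ (K + b : ℕ) (uncurry R) (0, 0) :=
      hR.of_le (by exact_mod_cast Nat.add_le_add_left (Finset.mem_range.1 hb).le K)
    have hbounded : (fun p : ℝ × ℝ => p.2 ^ b / (b.factorial : ℝ)) =O[𝓝 (0, 0)] fun _ => (1 : ℝ) :=
      (Continuous.tendsto (by fun_prop) (0, 0)).isBigO_one ℝ
    have hexpand := (isBigO_iteratedDeriv_snd_sub_sum_pderiv2 hR_b).comp_tendsto
      (continuousAt_fst (p := ((0 : ℝ), (0 : ℝ))))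
    simpa only [mul_one, comp_def] using hexpand.mul hbounded
  simp only [sub_sum_tcoeff_eq]
  exact (hexpand_snd.trans snd_pow_isBigO).add ((IsBigO.fun_sum hexpand_fst).trans fst_pow_isBigO)

end TaylorExpansion

section MonomialComparison

variable {α : Type*} {l : Filter α} {X Y : α → ℝ}

theorem isBigO_rpow_rpow_of_le (hX : Tendsto X l (𝓝[>] 0)) {s t : ℝ} (hst : s ≤ t) :
    (fun z => X z ^ t) =O[l] fun z => X z ^ s := by
  refine IsBigO.of_bound' ?_
  filter_upwards [hX.eventually (Ioc_mem_nhdsGT one_pos)] with z hz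
  rw [Real.norm_of_nonneg (Real.rpow_nonneg hz.1.le _),
    Real.norm_of_nonneg (Real.rpow_nonneg hz.1.le _)]
  exact Real.rpow_le_rpow_of_exponent_ge hz.1 hz.2 hst

theorem natPow_mul_rpow_pow_eventuallyEq (hX : Tendsto X l (𝓝[>] 0)) (M : ℝ) (c k : ℕ) :
    (fun z => X z ^ c * (X z ^ M) ^ k) =ᶠ[l] fun z => X z ^ (c + M * k : ℝ) := by
  filter_upwards [hX.eventually self_mem_nhdsWithin] with z hz
  rw [Real.rpow_add hz, Real.rpow_mul (le_of_lt hz), Real.rpow_natCast, Real.rpow_natCast]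

theorem pow_isLittleO_pow_mul_pow (hX : Tendsto X l (𝓝[>] 0)) {M : ℝ}
    (hXY : (fun z => X z ^ M) =o[l] Y) {a c k : ℕ} (hk : 0 < k) (h : (c : ℝ) + M * k ≤ a) :
    (fun z => X z ^ a) =o[l] fun z => X z ^ c * Y z ^ k := by
  have hexponent : (fun z => X z ^ a) =O[l] fun z => X z ^ c * (X z ^ M) ^ k := by
    simpa only [Real.rpow_natCast] using
      (isBigO_rpow_rpow_of_le hX h).trans_eventuallyEq
        (natPow_mul_rpow_pow_eventuallyEq hX M c k).symm
  exact hexponent.trans_isLittleO ((isBigO_refl _ l).mul_isLittleO (hXY.pow hk))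

theorem pow_mul_pow_isLittleO_pow (hX : Tendsto X l (𝓝[>] 0)) {M : ℝ}
    (hYX : Y =o[l] fun z => X z ^ M) {a c k : ℕ} (hk : 0 < k) (h : (c : ℝ) ≤ a + M * k) :
    (fun z => X z ^ a * Y z ^ k) =o[l] fun z => X z ^ c := by
  have hexponent : (fun z => X z ^ a * (X z ^ M) ^ k) =O[l] fun z => X z ^ c := by
    simpa only [Real.rpow_natCast] using
      (natPow_mul_rpow_pow_eventuallyEq hX M a k).trans_isBigO (isBigO_rpow_rpow_of_le hX h)
  exact ((isBigO_refl _ l).mul_isLittleO (hYX.pow hk)).trans_isBigO hexponent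

theorem monomial_isLittleO_vertex_monomial (hX : Tendsto X l (𝓝[>] 0)) {M₁ M₂ : ℝ}
    (hXY : (fun z => X z ^ M₁) =o[l] Y) (hYX : Y =o[l] fun z => X z ^ M₂) {a b c d : ℕ}
    (hne : (a, b) ≠ (c, d)) (h₁ : (c : ℝ) + M₁ * d ≤ a + M₁ * b)
    (h₂ : (c : ℝ) + M₂ * d ≤ a + M₂ * b) :
    (fun z => X z ^ a * Y z ^ b) =o[l] fun z => X z ^ c * Y z ^ d := by
  obtain hbd | rfl | hdb := lt_trichotomy b d
  · obtain ⟨k, hk, rfl⟩ := exists_pos_add_of_lt' hbd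
    have hexponent : (c : ℝ) + M₁ * k ≤ a := by push_cast at h₁; linarith
    simpa only [pow_add, mul_assoc, mul_comm, mul_left_comm] using
      (pow_isLittleO_pow_mul_pow hX hXY hk hexponent).mul_isBigO (isBigO_refl (fun z => Y z ^ b) l)
  · have hca : c < a := by
      refine lt_of_le_of_ne ?_ fun hca => hne (by rw [hca])
      exact_mod_cast le_of_add_le_add_right h₁
    have hX0 : Tendsto X l (𝓝 0) := hX.mono_right nhdsWithin_le_nhds
    exact ((isLittleO_pow_pow hca).comp_tendsto hX0).mul_isBigO (isBigO_refl _ l)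
  · obtain ⟨k, hk, rfl⟩ := exists_pos_add_of_lt' hdb
    have hexponent : (c : ℝ) ≤ a + M₂ * k := by push_cast at h₂; linarith
    simpa only [pow_add, mul_assoc, mul_comm, mul_left_comm] using
      (pow_mul_pow_isLittleO_pow hX hYX hk hexponent).mul_isBigO (isBigO_refl (fun z => Y z ^ d) l)

theorem eventually_norm_between_of_isEquivalent {E : Type*} [NormedAddCommGroup E] {u v : α → E}
    (h : u ~[l] v) (hv : ∀ᶠ z in l, v z ≠ 0) :
    ∀ᶠ z in l, 1 / 2 * ‖v z‖ < ‖u z‖ ∧ ‖u z‖ < 2 * ‖v z‖ := by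
  filter_upwards [h.isLittleO.def (c := 1 / 3) (by norm_num), hv] with z hz hvz
  have hpos : 0 < ‖v z‖ := norm_pos_iff.2 hvz
  have hlower := norm_sub_norm_le (v z) (u z)
  have hupper := norm_sub_norm_le (u z) (v z)
  rw [norm_sub_rev] at hlower
  rw [Pi.sub_apply] at hz
  constructor <;> linarith

end MonomialComparison

section CurvedSector

/-- The region `N|x|^{M₁} < |y| < (1/N)|x|^{M₂}` between two power curves. -/
def curvedSector (M₁ M₂ N : ℝ) : Set (ℝ × ℝ) :=
  {p | N * |p.1| ^ M₁ < |p.2| ∧ |p.2| < 1 / N * |p.1| ^ M₂}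

/-- The filter of points tending to the origin inside `curvedSector M₁ M₂ N` while `N → ∞`: a
property holds eventually if it holds near the origin in one of these sectors. -/
def curvedSectorFilter (M₁ M₂ : ℝ) : Filter (ℝ × ℝ) :=
  (⨅ (N : ℝ) (_ : 0 < N), 𝓟 (curvedSector M₁ M₂ N)) ⊓ 𝓝 (0, 0)

variable {M₁ M₂ : ℝ}

theorem curvedSector_subset_curvedSector {N N' : ℝ} (hN : 0 < N) (hNN' : N ≤ N') :
    curvedSector M₁ M₂ N' ⊆ curvedSector M₁ M₂ N := by
  rintro p ⟨hlower, hupper⟩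
  exact ⟨lt_of_le_of_lt (by gcongr) hlower, hupper.trans_le (by gcongr)⟩

theorem curvedSectorFilter_hasBasis (M₁ M₂ : ℝ) :
    (curvedSectorFilter M₁ M₂).HasBasis (fun i : ℝ × Set (ℝ × ℝ) => 0 < i.1 ∧ i.2 ∈ 𝓝 (0, 0))
      fun i => curvedSector M₁ M₂ i.1 ∩ i.2 := by
  refine (hasBasis_biInf_principal' (fun N hN N' hN' => ⟨max N N', lt_max_of_lt_left hN, ?_, ?_⟩)
    ⟨1, one_pos⟩).inf (𝓝 _).basis_sets
  · exact curvedSector_subset_curvedSector hN (le_max_left N N')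
  · exact curvedSector_subset_curvedSector hN' (le_max_right N N')

theorem curvedSectorFilter_le_nhds (M₁ M₂ : ℝ) : curvedSectorFilter M₁ M₂ ≤ 𝓝 (0, 0) :=
  inf_le_right

theorem curvedSector_mem_curvedSectorFilter {N : ℝ} (hN : 0 < N) :
    curvedSector M₁ M₂ N ∈ curvedSectorFilter M₁ M₂ :=
  mem_inf_of_left (mem_iInf_of_mem N (mem_iInf_of_mem hN (mem_principal_self _)))

theorem eventually_snd_ne_zero_curvedSectorFilter :
    ∀ᶠ p in curvedSectorFilter M₁ M₂, p.2 ≠ 0 := by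
  filter_upwards [curvedSector_mem_curvedSectorFilter one_pos] with p hp
  exact abs_pos.1 (lt_of_le_of_lt (by positivity) hp.1)

theorem eventually_fst_ne_zero_curvedSectorFilter (hM₂ : M₂ ≠ 0) :
    ∀ᶠ p in curvedSectorFilter M₁ M₂, p.1 ≠ 0 := by
  filter_upwards [curvedSector_mem_curvedSectorFilter one_pos] with p hp hp0
  have hneg : |p.2| < 0 := by simpa [hp0, Real.zero_rpow hM₂] using hp.2
  exact (abs_nonneg _).not_gt hneg

theorem tendsto_abs_fst_curvedSectorFilter (hM₂ : M₂ ≠ 0) :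
    Tendsto (fun p => |p.1|) (curvedSectorFilter M₁ M₂) (𝓝[>] 0) := by
  refine tendsto_nhdsWithin_iff.2 ⟨?_, ?_⟩
  · have hcont : Continuous fun p : ℝ × ℝ => |p.1| := by fun_prop
    simpa using (hcont.tendsto (0, 0)).mono_left (curvedSectorFilter_le_nhds M₁ M₂)
  · filter_upwards [eventually_fst_ne_zero_curvedSectorFilter hM₂] with p hp
    exact abs_pos.2 hp

theorem abs_fst_rpow_isLittleO_abs_snd :
    (fun p => |p.1| ^ M₁) =o[curvedSectorFilter M₁ M₂] fun p => |p.2| := by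
  refine IsLittleO.of_bound fun ε hε => ?_
  filter_upwards [curvedSector_mem_curvedSectorFilter (inv_pos.2 hε)] with p hp
  rw [Real.norm_of_nonneg (by positivity), Real.norm_of_nonneg (by positivity)]
  exact ((inv_mul_lt_iff₀ hε).1 hp.1).le

theorem abs_snd_isLittleO_abs_fst_rpow :
    (fun p => |p.2|) =o[curvedSectorFilter M₁ M₂] fun p => |p.1| ^ M₂ := by
  refine IsLittleO.of_bound fun ε hε => ?_
  filter_upwards [curvedSector_mem_curvedSectorFilter (inv_pos.2 hε)] with p hp
  rw [Real.norm_of_nonneg (by positivity), Real.norm_of_nonneg (by positivity)]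
  simpa using hp.2.le

theorem monomial_isLittleO_curvedSectorFilter (hM₂ : M₂ ≠ 0) {a b c d : ℕ}
    (hne : (a, b) ≠ (c, d)) (h₁ : (c : ℝ) + M₁ * d ≤ a + M₁ * b)
    (h₂ : (c : ℝ) + M₂ * d ≤ a + M₂ * b) :
    (fun p => p.1 ^ a * p.2 ^ b) =o[curvedSectorFilter M₁ M₂] fun p => p.1 ^ c * p.2 ^ d := by
  refine .of_abs_abs ?_
  simpa only [abs_mul, abs_pow] using monomial_isLittleO_vertex_monomial
    (tendsto_abs_fst_curvedSectorFilter hM₂) abs_fst_rpow_isLittleO_abs_snd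
    abs_snd_isLittleO_abs_fst_rpow hne h₁ h₂

end CurvedSector

section VertexAsymptotics

variable {M₁ M₂ : ℝ}

theorem eventually_remainder_isLittleO_vertex_monomial (hM₁ : 0 < M₁) (hM₂ : 0 < M₂) (c d : ℕ) :
    ∀ᶠ K : ℕ in atTop, (fun p => |p.1| ^ K + |p.2| ^ K)
      =o[curvedSectorFilter M₁ M₂] fun p => p.1 ^ c * p.2 ^ d := by
  have eventually_le_natCast (t : ℝ) : ∀ᶠ K : ℕ in atTop, t ≤ K :=
    tendsto_natCast_atTop_atTop.eventually_ge_atTop t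
  filter_upwards [eventually_gt_atTop c, eventually_gt_atTop d,
    eventually_le_natCast (c + M₁ * d), eventually_le_natCast (c + M₂ * d),
    eventually_le_natCast ((c + M₁ * d) / M₁), eventually_le_natCast ((c + M₂ * d) / M₂)]
    with K hcK hdK hfst₁ hfst₂ hsnd₁ hsnd₂
  rw [div_le_iff₀' hM₁] at hsnd₁
  rw [div_le_iff₀' hM₂] at hsnd₂
  have hfst : (fun p => p.1 ^ K * p.2 ^ 0) =o[curvedSectorFilter M₁ M₂]
      fun p => p.1 ^ c * p.2 ^ d :=
    monomial_isLittleO_curvedSectorFilter hM₂.ne' (by simp [hcK.ne']) (by simpa) (by simpa)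
  have hsnd : (fun p => p.1 ^ 0 * p.2 ^ K) =o[curvedSectorFilter M₁ M₂]
      fun p => p.1 ^ c * p.2 ^ d :=
    monomial_isLittleO_curvedSectorFilter hM₂.ne' (by simp [hdK.ne']) (by simpa) (by simpa)
  simpa only [abs_pow, pow_zero, mul_one, one_mul] using hfst.abs_left.add hsnd.abs_left

theorem isEquivalent_vertex_monomial {R : ℝ → ℝ → ℝ} (hR : ContDiffAt ℝ ∞ (uncurry R) (0, 0))
    {c d : ℕ} (hcd : (c, d) ∈ tsupp R) (hM₁ : 0 < M₁) (hM₂ : 0 < M₂)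
    (h₁ : ∀ q ∈ tsupp R, (c : ℝ) + M₁ * d ≤ q.1 + M₁ * q.2)
    (h₂ : ∀ q ∈ tsupp R, (c : ℝ) + M₂ * d ≤ q.1 + M₂ * q.2) :
    uncurry R ~[curvedSectorFilter M₁ M₂] fun p => tcoeff R c d * (p.1 ^ c * p.2 ^ d) := by
  obtain ⟨K, hremainder, hcK, hdK⟩ := ((eventually_remainder_isLittleO_vertex_monomial hM₁ hM₂
    c d).and ((eventually_gt_atTop c).and (eventually_gt_atTop d))).exists
  set square := Finset.range K ×ˢ Finset.range K
  have hmem : (c, d) ∈ square := by simp [square, hcK, hdK]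
  have htaylor : (fun p : ℝ × ℝ => R p.1 p.2 -
      ∑ q ∈ square, tcoeff R q.1 q.2 * (p.1 ^ q.1 * p.2 ^ q.2))
        =o[curvedSectorFilter M₁ M₂] fun p => p.1 ^ c * p.2 ^ d :=
    ((isBigO_sub_sum_tcoeff (hR.of_le (mod_cast le_top))).mono
      (curvedSectorFilter_le_nhds M₁ M₂)).trans_isLittleO hremainder
  have hother : (fun p : ℝ × ℝ =>
      ∑ q ∈ square.erase (c, d), tcoeff R q.1 q.2 * (p.1 ^ q.1 * p.2 ^ q.2))
        =o[curvedSectorFilter M₁ M₂] fun p => p.1 ^ c * p.2 ^ d := by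
    refine IsLittleO.fun_sum fun q hq => ?_
    by_cases hq0 : tcoeff R q.1 q.2 = 0
    · simp [hq0]
    · exact (monomial_isLittleO_curvedSectorFilter hM₂.ne' (Finset.ne_of_mem_erase hq)
        (h₁ q hq0) (h₂ q hq0)).const_mul_left _
  refine ((htaylor.add hother).congr_left fun p => ?_).const_mul_right hcd
  rw [← Finset.add_sum_erase square _ hmem, Pi.sub_apply, uncurry_def]
  ring

end VertexAsymptotics

/-- Lemma 2.2 (vertex between two compact edges): near the origin, in the region
`N|x|^{M₁} < |y| < (1/N)|x|^{M₂}`, `R` is comparable to its vertex monomial. -/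
theorem stmt_2 (R : ℝ → ℝ → ℝ) (U₀ : Set (ℝ × ℝ)) (hU₀ : U₀ ∈ 𝓝 ((0 : ℝ), (0 : ℝ)))
    (hsm : ContDiffOn ℝ (⊤ : ℕ∞) (fun p : ℝ × ℝ => R p.1 p.2) U₀)
    (h0 : R 0 0 = 0) (hts : (tsupp R).Nonempty)
    (c d : ℕ) (hcd : (c, d) ∈ tsupp R) (M₁ M₂ : ℝ) (hM₂ : 0 < M₂) (hM : M₂ < M₁)
    (h₁ : ∀ p ∈ tsupp R, (c : ℝ) + M₁ * d ≤ (p.1 : ℝ) + M₁ * p.2)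
    (h₂ : ∀ p ∈ tsupp R, (c : ℝ) + M₂ * d ≤ (p.1 : ℝ) + M₂ * p.2) :
    ∃ N > (0 : ℝ), ∃ U ∈ 𝓝 ((0 : ℝ), (0 : ℝ)), ∀ x y : ℝ, (x, y) ∈ U →
      N * |x| ^ M₁ < |y| → |y| < (1 / N) * |x| ^ M₂ →
      (1 / 2) * |tcoeff R c d| * |x| ^ c * |y| ^ d < |R x y| ∧
        |R x y| < 2 * |tcoeff R c d| * |x| ^ c * |y| ^ d := by
  have hequiv := isEquivalent_vertex_monomial (hsm.contDiffAt hU₀) hcd (hM₂.trans hM) hM₂ h₁ h₂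
  have hne : ∀ᶠ p in curvedSectorFilter M₁ M₂, tcoeff R c d * (p.1 ^ c * p.2 ^ d) ≠ 0 := by
    filter_upwards [eventually_fst_ne_zero_curvedSectorFilter hM₂.ne',
      eventually_snd_ne_zero_curvedSectorFilter] with p hx hy
    exact mul_ne_zero hcd (mul_ne_zero (pow_ne_zero c hx) (pow_ne_zero d hy))
  obtain ⟨⟨N, U⟩, ⟨hN, hU⟩, hbounds⟩ := (curvedSectorFilter_hasBasis M₁ M₂).eventually_iff.1
    (eventually_norm_between_of_isEquivalent hequiv hne)
  refine ⟨N, hN, U, hU, fun x y hxy hlower hupper => ?_⟩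
  simpa only [norm_mul, norm_pow, Real.norm_eq_abs, mul_assoc, uncurry_apply_pair] using
    hbounds (x := (x, y)) ⟨⟨hlower, hupper⟩, hxy⟩

end
end

section
/- Let f be a smooth function on a neighborhood of (0,0) in ℝ² with f(0,0) = 0 and ∇f(0,0) = (0,0), let M ≥ 1, and let ψ be a smooth function of one variable with ψ^{(j)}(0) = 0 for every integer j < M. Set F(x,y) = f(x, y + ψ(x)) and α = α_M(F), and suppose r ≠ 0 satisfies F_M(1,r) ≠ 0, ∂_y F_M(1,r) = 0 and ∂_y² F_M(1,r) = 0. Then there exist C, μ, ν > 0 such that |∂²f/∂x²(x,y)| ≥ C x^{α−2} for all (x,y) with 0 < x < μ and |y − ψ(x) − r x^M| < ν x^M. -/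
open MeasureTheory Set Filter Topology

noncomputable section

/-!
Give `x` weight `1` and `y` weight `M`, and let `W = F_M` be the principal part of `F`, of weighted
degree `α`. On the curves `y = t * x ^ M` with `t → r` and `x → 0⁺`, the derivative `∂_x^a ∂_y^b F`
divided by `x ^ (α - a - M * b)` tends to `∂_x^a ∂_y^b W` at `(1, r)`.

Where `∂_y W = ∂_y² W = 0`, Euler's identity gives `∂_x ∂_y W = 0` and `∂_x² W = α (α - 1) W`, and
`α ≠ 0, 1` because `F` and `∂_x F` vanish at the origin. Hence `∂_x² F` is asymptotic to
`α (α - 1) W(1, r) x ^ (α - 2)`.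

Undoing the shear by `ψ` adds multiples of `ψ' ∂_x ∂_y F`, `ψ'² ∂_y² F` and `ψ'' ∂_y F` to `∂_x² F`.
Since `ψ⁽ⁱ⁾ = O(x ^ (M - i))`, these are `O(x ^ (α - 2))`, and even `o(x ^ (α - 2))` because the
derivatives of `W` occurring in them vanish.
-/

section SmoothFunctions

variable {E : Type*} [NormedAddCommGroup E] [NormedSpace ℝ E]

/-- The space of smooth real-valued functions on `E`. Smoothness is bundled so that the directional
derivatives are commuting endomorphisms, which can be iterated freely. -/
def smoothFn (E : Type*) [NormedAddCommGroup E] [NormedSpace ℝ E] : Submodule ℝ (E → ℝ) where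
  carrier := {G | ContDiff ℝ (⊤ : ℕ∞) G}
  add_mem' hG hH := by
    rw [mem_ofPred_eq] at *
    exact hG.add hH
  zero_mem' := by
    rw [mem_ofPred_eq]
    exact contDiff_const
  smul_mem' c G hG := by
    rw [mem_ofPred_eq] at *
    exact contDiff_const.smul hG

instance : CoeFun (smoothFn E) fun _ => E → ℝ := ⟨Subtype.val⟩

lemma smoothFn.contDiff (G : smoothFn E) : ContDiff ℝ (⊤ : ℕ∞) G := G.2

lemma smoothFn.differentiable (G : smoothFn E) : Differentiable ℝ G :=
  (smoothFn.contDiff G).differentiable (by simp)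

lemma smoothFn.contDiff_fderiv (G : smoothFn E) : ContDiff ℝ (⊤ : ℕ∞) (fderiv ℝ G) :=
  (smoothFn.contDiff G).fderiv_right (by simp)

/-- The directional derivative along `v`, as an endomorphism of the smooth functions. -/
def dirDeriv (v : E) : Module.End ℝ (smoothFn E) where
  toFun G := ⟨fun p => fderiv ℝ G p v, (smoothFn.contDiff_fderiv G).clm_apply contDiff_const⟩
  map_add' G H := by
    ext p
    simp [fderiv_add (smoothFn.differentiable G p) (smoothFn.differentiable H p)]
  map_smul' c G := by
    ext p
    simp [fderiv_const_smul (smoothFn.differentiable G p) c]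

lemma dirDeriv_apply (v : E) (G : smoothFn E) (p : E) : dirDeriv v G p = fderiv ℝ G p v := rfl

lemma dirDeriv_dirDeriv_apply (v w : E) (G : smoothFn E) (p : E) :
    dirDeriv v (dirDeriv w G) p = fderiv ℝ (fderiv ℝ G) p v w := by
  have hd : DifferentiableAt ℝ (fderiv ℝ G) p :=
    (smoothFn.contDiff_fderiv G).differentiable (by simp) p
  change fderiv ℝ (fun q => fderiv ℝ G q w) p v = _
  simp [fderiv_clm_apply hd (differentiableAt_const w)]

lemma commute_dirDeriv (v w : E) : Commute (dirDeriv v) (dirDeriv w) := by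
  ext G p
  have hsymm : IsSymmSndFDerivAt ℝ G p :=
    (smoothFn.contDiff G).contDiffAt.isSymmSndFDerivAt (by simpa using ENat.LEInfty.out)
  change dirDeriv v (dirDeriv w G) p = dirDeriv w (dirDeriv v G) p
  rw [dirDeriv_dirDeriv_apply, dirDeriv_dirDeriv_apply, hsymm v w]

lemma hasDerivAt_smoothFn_comp (G : smoothFn E) {γ : ℝ → E} {v : E} {t : ℝ}
    (hγ : HasDerivAt γ v t) : HasDerivAt (fun s => G (γ s)) (dirDeriv v G (γ t)) t :=
  (smoothFn.differentiable G (γ t)).hasFDerivAt.comp_hasDerivAt t hγ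

lemma iteratedDeriv_smoothFn_line (G : smoothFn E) (n : ℕ) (p v : E) :
    iteratedDeriv n (fun t : ℝ => G (p + t • v)) = fun t => (dirDeriv v ^ n) G (p + t • v) := by
  induction n generalizing G with
  | zero => simp
  | succ n ih =>
    have hderiv : deriv (fun t : ℝ => G (p + t • v)) = fun t => dirDeriv v G (p + t • v) := by
      ext t
      have hline : HasDerivAt (fun s : ℝ => p + s • v) v t := by
        simpa using ((hasDerivAt_id t).smul_const v).const_add p
      exact (hasDerivAt_smoothFn_comp G hline).deriv
    rw [iteratedDeriv_succ', hderiv, ih, pow_succ]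
    rfl

lemma exists_smoothFn_eventuallyEq [HasContDiffBump E] [FiniteDimensional ℝ E] {f : E → ℝ}
    {U : Set E} {p₀ : E} (hU : U ∈ 𝓝 p₀) (hf : ContDiffOn ℝ (⊤ : ℕ∞) f U) :
    ∃ g : smoothFn E, f =ᶠ[𝓝 p₀] g := by
  obtain ⟨R, hR, hRU⟩ := Metric.nhds_basis_ball.mem_iff.1 hU
  let χ : ContDiffBump p₀ := ⟨R / 3, R / 2, by positivity, by linarith⟩
  have hsmooth : ContDiff ℝ (⊤ : ℕ∞) fun p => χ p * f p := by
    rw [← contMDiff_iff_contDiff]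
    refine contMDiff_of_tsupport fun p hp => contMDiffAt_iff_contDiffAt.2 ?_
    have hpR : p ∈ Metric.ball p₀ R := by
      have hp' : p ∈ Metric.closedBall p₀ (R / 2) := χ.tsupport_eq ▸ tsupport_mul_subset_left hp
      exact Metric.closedBall_subset_ball (half_lt_self hR) hp'
    exact χ.contDiffAt.mul
      (hf.contDiffAt (mem_of_superset (Metric.isOpen_ball.mem_nhds hpR) hRU))
  refine ⟨⟨_, hsmooth⟩, ?_⟩
  filter_upwards [χ.eventuallyEq_one] with p hp
  simp [hp]

end SmoothFunctions

section Plane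

/-- The partial derivative in the first variable. -/
abbrev dX : Module.End ℝ (smoothFn (ℝ × ℝ)) := dirDeriv (1, 0)

/-- The partial derivative in the second variable. -/
abbrev dY : Module.End ℝ (smoothFn (ℝ × ℝ)) := dirDeriv (0, 1)

variable (G : smoothFn (ℝ × ℝ))

lemma dY_dX : dY (dX G) = dX (dY G) :=
  LinearMap.congr_fun (commute_dirDeriv (0, 1) (1, 0)).eq G

lemma fderiv_apply_eq_partials (p v : ℝ × ℝ) :
    fderiv ℝ G p v = v.1 * dX G p + v.2 * dY G p := by
  have hv : v = v.1 • ((1 : ℝ), (0 : ℝ)) + v.2 • ((0 : ℝ), (1 : ℝ)) := by ext <;> simp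
  conv_lhs => rw [hv, map_add, map_smul, map_smul]
  rfl

lemma norm_fderiv_le_partials (p : ℝ × ℝ) : ‖fderiv ℝ G p‖ ≤ ‖dX G p‖ + ‖dY G p‖ := by
  refine ContinuousLinearMap.opNorm_le_bound _ (by positivity) fun v => ?_
  calc ‖fderiv ℝ G p v‖ ≤ ‖v.1‖ * ‖dX G p‖ + ‖v.2‖ * ‖dY G p‖ := by
        rw [fderiv_apply_eq_partials, ← norm_mul, ← norm_mul]
        exact norm_add_le _ _
    _ ≤ ‖v‖ * ‖dX G p‖ + ‖v‖ * ‖dY G p‖ := by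
        gcongr
        exacts [norm_fst_le v, norm_snd_le v]
    _ = (‖dX G p‖ + ‖dY G p‖) * ‖v‖ := by ring

lemma hasDerivAt_dX (x y : ℝ) : HasDerivAt (fun s => G (s, y)) (dX G (x, y)) x :=
  hasDerivAt_smoothFn_comp G ((hasDerivAt_id x).prodMk (hasDerivAt_const x y))

lemma hasDerivAt_dY (x y : ℝ) : HasDerivAt (fun s => G (x, s)) (dY G (x, y)) y :=
  hasDerivAt_smoothFn_comp G ((hasDerivAt_const y x).prodMk (hasDerivAt_id y))

lemma iteratedDeriv_fst (n : ℕ) (y : ℝ) :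
    iteratedDeriv n (fun x => G (x, y)) = fun x => (dX ^ n) G (x, y) := by
  simpa using iteratedDeriv_smoothFn_line G n (0, y) (1, 0)

lemma iteratedDeriv_snd (n : ℕ) (x : ℝ) :
    iteratedDeriv n (fun y => G (x, y)) = fun y => (dY ^ n) G (x, y) := by
  simpa using iteratedDeriv_smoothFn_line G n (x, 0) (0, 1)

lemma pderiv2_curry (a b : ℕ) (x y : ℝ) :
    pderiv2 (G : ℝ × ℝ → ℝ).curry a b x y = (dX ^ a * dY ^ b) G (x, y) := by
  simp only [pderiv2, Function.curry_apply, iteratedDeriv_snd, iteratedDeriv_fst]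
  rfl

lemma partials_dX (a b : ℕ) : (dX ^ a * dY ^ b) (dX G) = (dX ^ (a + 1) * dY ^ b) G := by
  rw [pow_succ, mul_assoc, ((commute_dirDeriv _ _).pow_right b).eq, ← mul_assoc]
  rfl

lemma partials_dY (a b : ℕ) : (dX ^ a * dY ^ b) (dY G) = (dX ^ a * dY ^ (b + 1)) G := by
  rw [pow_succ, ← mul_assoc]
  rfl

lemma isLittleO_norm_pow_of_partials_eq_zero {N : ℕ}
    (h : ∀ a b, a + b ≤ N → (dX ^ a * dY ^ b) G 0 = 0) :
    G =o[𝓝 0] fun p => ‖p‖ ^ N := by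
  induction N generalizing G with
  | zero =>
    have h0 : G 0 = 0 := by simpa using h 0 0 le_rfl
    simpa [h0] using (smoothFn.contDiff G).continuous.tendsto 0
  | succ N ih =>
    have hX := ih (dX G) fun a b hab => by rw [partials_dX, h (a + 1) b (by lia)]
    have hY := ih (dY G) fun a b hab => by rw [partials_dY, h a (b + 1) (by lia)]
    have hfderiv : fderiv ℝ G =o[𝓝 0] fun p : ℝ × ℝ => ‖p‖ ^ N :=
      (Asymptotics.IsBigO.of_norm_le fun p => norm_fderiv_le_partials G p).trans_isLittleO
        (hX.norm_left.add hY.norm_left)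
    have h0 : G 0 = 0 := by simpa using h 0 0 (by lia)
    simpa [h0] using convex_univ.isLittleO_pow_succ (mem_univ (0 : ℝ × ℝ))
      (fun p _ => (smoothFn.differentiable G p).hasFDerivAt.hasFDerivWithinAt)
      (by simpa using hfderiv)

end Plane

section Taylor

variable (G : smoothFn (ℝ × ℝ))

/-- The Taylor coefficient at the origin, as a linear functional on the smooth functions. -/
def taylorCoeff (a b : ℕ) : smoothFn (ℝ × ℝ) →ₗ[ℝ] ℝ where
  toFun G := (dX ^ a * dY ^ b) G 0 / (a.factorial * b.factorial)
  map_add' G H := by simp [add_div]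
  map_smul' c G := by simp [mul_div_assoc]

lemma taylorCoeff_apply (a b : ℕ) :
    taylorCoeff a b G = (dX ^ a * dY ^ b) G 0 / (a.factorial * b.factorial) := rfl

lemma tcoeff_curry (a b : ℕ) : tcoeff (G : ℝ × ℝ → ℝ).curry a b = taylorCoeff a b G := by
  rw [tcoeff, pderiv2_curry, Prod.mk_zero_zero, taylorCoeff_apply]

lemma taylorCoeff_eq_zero_iff (a b : ℕ) :
    taylorCoeff a b G = 0 ↔ (dX ^ a * dY ^ b) G 0 = 0 := by
  simp [taylorCoeff_apply, Nat.factorial_ne_zero]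

lemma taylorCoeff_zero_zero : taylorCoeff 0 0 G = G 0 := by simp [taylorCoeff_apply]

lemma taylorCoeff_dX (a b : ℕ) :
    taylorCoeff a b (dX G) = ((a + 1 : ℕ) : ℝ) * taylorCoeff (a + 1) b G := by
  rw [taylorCoeff_apply, taylorCoeff_apply, partials_dX, Nat.factorial_succ]
  push_cast
  field_simp

lemma taylorCoeff_dY (a b : ℕ) :
    taylorCoeff a b (dY G) = ((b + 1 : ℕ) : ℝ) * taylorCoeff a (b + 1) G := by
  rw [taylorCoeff_apply, taylorCoeff_apply, partials_dY, Nat.factorial_succ]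
  push_cast
  field_simp

/-- The monomial `x ^ i * y ^ j` as a smooth function. -/
def smoothMonomial (i j : ℕ) : smoothFn (ℝ × ℝ) :=
  ⟨fun p => p.1 ^ i * p.2 ^ j, show ContDiff ℝ (⊤ : ℕ∞) _ by fun_prop⟩

lemma smoothMonomial_apply (i j : ℕ) (p : ℝ × ℝ) : smoothMonomial i j p = p.1 ^ i * p.2 ^ j := rfl

lemma dX_smoothMonomial (i j : ℕ) :
    dX (smoothMonomial i j) = (i : ℝ) • smoothMonomial (i - 1) j := by
  ext ⟨x, y⟩
  have h := (hasDerivAt_dX (smoothMonomial i j) x y).unique ((hasDerivAt_pow i x).mul_const (y ^ j))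
  simpa [smoothMonomial_apply, mul_assoc] using h

lemma dY_smoothMonomial (i j : ℕ) :
    dY (smoothMonomial i j) = (j : ℝ) • smoothMonomial i (j - 1) := by
  ext ⟨x, y⟩
  have h := (hasDerivAt_dY (smoothMonomial i j) x y).unique ((hasDerivAt_pow j y).const_mul (x ^ i))
  simpa [smoothMonomial_apply, mul_left_comm] using h

lemma taylorCoeff_smoothMonomial (a b i j : ℕ) :
    taylorCoeff a b (smoothMonomial i j) = if (a, b) = (i, j) then 1 else 0 := by
  rw [← tcoeff_curry]
  simp only [tcoeff, pderiv2, Function.curry_apply, smoothMonomial_apply,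
    iteratedDeriv_const_mul_field, iteratedDeriv_mul_const_field, iteratedDeriv_fun_pow_zero]
  rcases eq_or_ne a i with rfl | ha <;> rcases eq_or_ne b j with rfl | hb <;>
    simp [*, Nat.factorial_ne_zero]

/-- The part of the Taylor series of `G` at the origin with degree at most `N` in each variable. -/
def taylorPoly (N : ℕ) (G : smoothFn (ℝ × ℝ)) : smoothFn (ℝ × ℝ) :=
  ∑ q ∈ Finset.range (N + 1) ×ˢ Finset.range (N + 1),
    taylorCoeff q.1 q.2 G • smoothMonomial q.1 q.2

lemma taylorCoeff_taylorPoly {N a b : ℕ} (ha : a ≤ N) (hb : b ≤ N) :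
    taylorCoeff a b (taylorPoly N G) = taylorCoeff a b G := by
  have hmem : (a, b) ∈ Finset.range (N + 1) ×ˢ Finset.range (N + 1) := by
    simp [ha, hb]
  simp [taylorPoly, taylorCoeff_smoothMonomial, Finset.sum_ite_eq, hmem]

lemma isLittleO_sub_taylorPoly (N : ℕ) :
    (G - taylorPoly N G : smoothFn (ℝ × ℝ)) =o[𝓝 0] fun p => ‖p‖ ^ N := by
  refine isLittleO_norm_pow_of_partials_eq_zero _ fun a b hab => ?_
  rw [← taylorCoeff_eq_zero_iff, map_sub, taylorCoeff_taylorPoly G (by lia) (by lia), sub_self]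

end Taylor

section WeightedPrincipalPart

/-- The exponents `(a, b)` of weighted degree `a + M * b = β`; see `mem_weightLevel`. -/
def weightLevel (M β : ℝ) : Finset (ℕ × ℕ) :=
  (Finset.range (⌊β⌋₊ + 1) ×ˢ Finset.range (⌊β / M⌋₊ + 1)).filter fun q => (q.1 : ℝ) + M * q.2 = β

/-- The part of weighted degree `β` of the Taylor series of `G` at the origin, where `x` has weight
`1` and `y` has weight `M`. -/
def weightPart (M β : ℝ) (G : smoothFn (ℝ × ℝ)) : smoothFn (ℝ × ℝ) :=
  ∑ q ∈ weightLevel M β, taylorCoeff q.1 q.2 G • smoothMonomial q.1 q.2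

variable {M : ℝ} (hM : 0 < M) (β : ℝ) (G : smoothFn (ℝ × ℝ))

lemma weightPart_apply (p : ℝ × ℝ) :
    weightPart M β G p =
      ∑ q ∈ weightLevel M β, taylorCoeff q.1 q.2 G * (p.1 ^ q.1 * p.2 ^ q.2) := by
  simp [weightPart, smoothMonomial_apply]

lemma euler_weightPart (p : ℝ × ℝ) :
    p.1 * dX (weightPart M β G) p + M * p.2 * dY (weightPart M β G) p =
      β * weightPart M β G p := by
  have hmonomial (i j : ℕ) : p.1 * (i * (p.1 ^ (i - 1) * p.2 ^ j)) +
      M * p.2 * (j * (p.1 ^ i * p.2 ^ (j - 1))) = (i + M * j) * (p.1 ^ i * p.2 ^ j) := by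
    cases i <;> cases j <;> simp <;> ring
  simp only [weightPart, map_sum, map_smul, dX_smoothMonomial, dY_smoothMonomial,
    Submodule.coe_sum, Submodule.coe_smul, Finset.sum_apply, Pi.smul_apply, smul_eq_mul,
    smoothMonomial_apply, Finset.mul_sum, ← Finset.sum_add_distrib]
  refine Finset.sum_congr rfl fun q hq => ?_
  have hweight : (q.1 : ℝ) + M * q.2 = β := (Finset.mem_filter.1 hq).2
  linear_combination taylorCoeff q.1 q.2 G * hmonomial q.1 q.2 +
    taylorCoeff q.1 q.2 G * (p.1 ^ q.1 * p.2 ^ q.2) * hweight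

include hM

lemma mem_weightLevel {β : ℝ} {q : ℕ × ℕ} : q ∈ weightLevel M β ↔ (q.1 : ℝ) + M * q.2 = β := by
  refine ⟨fun hq => (Finset.mem_filter.1 hq).2, fun hq => Finset.mem_filter.2 ⟨?_, hq⟩⟩
  simp only [Finset.mem_product, Finset.mem_range, Nat.lt_succ_iff]
  refine ⟨Nat.le_floor ?_, Nat.le_floor ?_⟩
  · exact hq ▸ le_add_of_nonneg_right (by positivity)
  · rw [le_div_iff₀' hM]
    exact hq ▸ le_add_of_nonneg_left (by positivity)

lemma RMpart_curry (x y : ℝ) :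
    RMpart (G : ℝ × ℝ → ℝ).curry M x y =
      weightPart M (alphaM (G : ℝ × ℝ → ℝ).curry M) G (x, y) := by
  rw [weightPart_apply, RMpart, tsum_eq_sum (s := weightLevel M (alphaM (G : ℝ × ℝ → ℝ).curry M))]
  · refine Finset.sum_congr rfl fun q hq => ?_
    by_cases hc : taylorCoeff q.1 q.2 G = 0 <;>
      simp [indicator, tsupp, tcoeff_curry, (mem_weightLevel hM).1 hq, hc, mul_assoc]
  · exact fun q hq => indicator_of_notMem (fun h => hq ((mem_weightLevel hM).2 h.2)) _

lemma dX_weightPart : dX (weightPart M β G) = weightPart M (β - 1) (dX G) := by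
  simp only [weightPart, map_sum, map_smul, dX_smoothMonomial]
  symm
  refine Finset.sum_of_injOn (fun q => (q.1 + 1, q.2)) (fun _ _ _ _ => by simp [Prod.ext_iff])
    (fun q hq => ?_) (fun q hq hq' => ?_) (fun q _ => ?_)
  · rw [Finset.mem_coe, mem_weightLevel hM] at *
    push_cast
    linarith
  · rcases q with ⟨_ | a, b⟩
    · simp
    · refine (hq' ⟨(a, b), ?_, rfl⟩).elim
      rw [mem_weightLevel hM] at hq
      rw [Finset.mem_coe, mem_weightLevel hM]
      push_cast at hq
      linarith
  · rw [taylorCoeff_dX, smul_smul, mul_comm]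
    rfl

lemma dY_weightPart : dY (weightPart M β G) = weightPart M (β - M) (dY G) := by
  simp only [weightPart, map_sum, map_smul, dY_smoothMonomial]
  symm
  refine Finset.sum_of_injOn (fun q => (q.1, q.2 + 1)) (fun _ _ _ _ => by simp [Prod.ext_iff])
    (fun q hq => ?_) (fun q hq hq' => ?_) (fun q _ => ?_)
  · rw [Finset.mem_coe, mem_weightLevel hM] at *
    push_cast
    linarith
  · rcases q with ⟨a, _ | b⟩
    · simp
    · refine (hq' ⟨(a, b), ?_, rfl⟩).elim
      rw [mem_weightLevel hM] at hq
      rw [Finset.mem_coe, mem_weightLevel hM]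
      push_cast at hq
      linarith
  · rw [taylorCoeff_dY, smul_smul, mul_comm]
    rfl

lemma weightPart_zero (p : ℝ × ℝ) : weightPart M 0 G p = G 0 := by
  have hlevel : weightLevel M 0 = {(0, 0)} := by
    ext ⟨a, b⟩
    rw [mem_weightLevel hM, add_eq_zero_iff_of_nonneg (by positivity) (by positivity)]
    simp [hM.ne']
  simp [weightPart_apply, hlevel, taylorCoeff_zero_zero]

lemma deriv_RMpart_curry (x y : ℝ) :
    deriv (RMpart (G : ℝ × ℝ → ℝ).curry M x) y =
      dY (weightPart M (alphaM (G : ℝ × ℝ → ℝ).curry M) G) (x, y) := by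
  rw [funext (RMpart_curry hM G x)]
  exact (hasDerivAt_dY _ x y).deriv

lemma iteratedDeriv_two_RMpart_curry (x y : ℝ) :
    iteratedDeriv 2 (RMpart (G : ℝ × ℝ → ℝ).curry M x) y =
      dY (dY (weightPart M (alphaM (G : ℝ × ℝ → ℝ).curry M) G)) (x, y) := by
  rw [funext (RMpart_curry hM G x), iteratedDeriv_snd]
  rfl

end WeightedPrincipalPart

section CriticalPoint

variable {M β r : ℝ} (G : smoothFn (ℝ × ℝ)) (hY : dY (weightPart M β G) (1, r) = 0)

include hY

lemma dX_weightPart_of_dY_eq_zero :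
    dX (weightPart M β G) (1, r) = β * weightPart M β G (1, r) := by
  simpa [hY] using euler_weightPart (M := M) β G (1, r)

variable (hM : 0 < M)

include hM

lemma dX_dY_weightPart_eq_zero (hYY : dY (dY (weightPart M β G)) (1, r) = 0) :
    dX (dY (weightPart M β G)) (1, r) = 0 := by
  have heuler := euler_weightPart (M := M) (β - M) (dY G) (1, r)
  rw [← dY_weightPart hM] at heuler
  simpa [hY, hYY] using heuler

lemma dX_dX_weightPart_eq (hYY : dY (dY (weightPart M β G)) (1, r) = 0) :
    dX (dX (weightPart M β G)) (1, r) = β * (β - 1) * weightPart M β G (1, r) := by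
  have heuler := euler_weightPart (M := M) (β - 1) (dX G) (1, r)
  rw [← dX_weightPart hM, dY_dX, dX_dY_weightPart_eq_zero G hY hM hYY,
    dX_weightPart_of_dY_eq_zero G hY] at heuler
  linear_combination heuler

lemma weight_mul_sub_one_ne_zero (hW : weightPart M β G (1, r) ≠ 0) (h0 : G 0 = 0)
    (hX0 : dX G 0 = 0) : β * (β - 1) ≠ 0 := by
  refine mul_ne_zero ?_ (sub_ne_zero.2 ?_)
  · rintro rfl
    exact hW (by rw [weightPart_zero hM, h0])
  · rintro rfl
    rw [← one_mul (weightPart M 1 G (1, r)), ← dX_weightPart_of_dY_eq_zero G hY,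
      dX_weightPart hM, sub_self, weightPart_zero hM] at hW
    exact hW hX0

end CriticalPoint

section WeightedBlowup

/-- `G` vanishes to weighted order `β` at the origin: its Taylor series contains no monomial
`x ^ a * y ^ b` of weighted degree `a + M * b < β`. -/
def WeightGE (M β : ℝ) (G : smoothFn (ℝ × ℝ)) : Prop :=
  ∀ a b : ℕ, (a : ℝ) + M * b < β → taylorCoeff a b G = 0

lemma weightGE_alphaM {M : ℝ} (hM : 0 < M) (G : smoothFn (ℝ × ℝ)) :
    WeightGE M (alphaM (G : ℝ × ℝ → ℝ).curry M) G := by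
  intro a b hab
  by_contra hne
  have hbdd : BddBelow {t : ℝ | ∃ p ∈ tsupp (G : ℝ × ℝ → ℝ).curry, t = (p.1 : ℝ) + M * p.2} := by
    refine ⟨0, ?_⟩
    rintro _ ⟨p, -, rfl⟩
    positivity
  exact hab.not_ge (csInf_le hbdd ⟨(a, b), by simpa [tsupp, tcoeff_curry] using hne, rfl⟩)

lemma WeightGE.dX {M β : ℝ} {G : smoothFn (ℝ × ℝ)} (h : WeightGE M β G) :
    WeightGE M (β - 1) (dX G) := by
  intro a b hab
  rw [taylorCoeff_dX, h (a + 1) b (by push_cast; linarith), mul_zero]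

lemma WeightGE.dY {M β : ℝ} {G : smoothFn (ℝ × ℝ)} (h : WeightGE M β G) :
    WeightGE M (β - M) (dY G) := by
  intro a b hab
  rw [taylorCoeff_dY, h a (b + 1) (by push_cast; linarith), mul_zero]

/-- The weighted blow-up `(x, t) ↦ (x, t * x ^ M)`, whose coordinate `t` parametrizes the curves
`y = t * x ^ M`. -/
def blowup (M : ℝ) (z : ℝ × ℝ) : ℝ × ℝ := (z.1, z.2 * z.1 ^ M)

variable {M β r : ℝ}

lemma eventually_fst_pos : ∀ᶠ z : ℝ × ℝ in 𝓝[>] 0 ×ˢ 𝓝 r, 0 < z.1 :=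
  tendsto_fst.eventually self_mem_nhdsWithin

lemma isBigO_rpow_rpow_nhdsGT {a b : ℝ} (hab : b ≤ a) :
    (fun x : ℝ => x ^ a) =O[𝓝[>] 0] fun x => x ^ b := by
  refine Asymptotics.IsBigO.of_norm_eventuallyLE ?_
  filter_upwards [Ioo_mem_nhdsGT one_pos] with x hx
  rw [Real.norm_of_nonneg (Real.rpow_nonneg hx.1.le a)]
  exact Real.rpow_le_rpow_of_exponent_ge hx.1 hx.2.le hab

lemma tendsto_rpow_nhdsGT {e : ℝ} (he : 0 < e) :
    Tendsto (fun x : ℝ => x ^ e) (𝓝[>] 0) (𝓝 0) := by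
  simpa [Real.zero_rpow he.ne'] using
    (Real.continuousAt_rpow_const 0 e (Or.inr he.le)).tendsto.mono_left nhdsWithin_le_nhds

lemma isBigO_blowup (M : ℝ) :
    blowup M =O[𝓝[>] 0 ×ˢ 𝓝 r] fun z => z.1 ^ min 1 M := by
  refine Asymptotics.IsBigO.prod_left ?_ ?_
  · simpa [Function.comp_def, blowup] using
      (isBigO_rpow_rpow_nhdsGT (min_le_left 1 M)).comp_tendsto (tendsto_fst (g := 𝓝 r))
  · simpa using (tendsto_snd (f := 𝓝[>] (0 : ℝ)) (g := 𝓝 r)).isBigO_one ℝ |>.mul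
      ((isBigO_rpow_rpow_nhdsGT (min_le_right 1 M)).comp_tendsto (tendsto_fst (g := 𝓝 r)))

lemma tendsto_blowup (hM : 0 < M) : Tendsto (blowup M) (𝓝[>] 0 ×ˢ 𝓝 r) (𝓝 0) :=
  (isBigO_blowup M).trans_tendsto
    ((tendsto_rpow_nhdsGT (lt_min one_pos hM)).comp tendsto_fst)

lemma tendsto_smoothMonomial_blowup_div {a b : ℕ} (hab : β ≤ a + M * b) :
    Tendsto (fun z => smoothMonomial a b (blowup M z) / z.1 ^ β) (𝓝[>] 0 ×ˢ 𝓝 r)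
      (𝓝 (if (a : ℝ) + M * b = β then r ^ b else 0)) := by
  have hquot : (fun z => smoothMonomial a b (blowup M z) / z.1 ^ β) =ᶠ[𝓝[>] 0 ×ˢ 𝓝 r]
      fun z => z.2 ^ b * z.1 ^ (a + M * b - β) := by
    filter_upwards [eventually_fst_pos] with z hz
    simp only [smoothMonomial_apply, blowup, mul_pow]
    rw [Real.rpow_sub hz, Real.rpow_add hz, Real.rpow_natCast, Real.rpow_mul_natCast hz.le]
    ring
  have hsnd : Tendsto (fun z : ℝ × ℝ => z.2 ^ b) (𝓝[>] 0 ×ˢ 𝓝 r) (𝓝 (r ^ b)) :=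
    tendsto_snd.pow b
  refine Tendsto.congr' hquot.symm ?_
  split_ifs with heq
  · simpa [heq] using hsnd
  · have hpos : 0 < a + M * b - β := sub_pos.2 (hab.lt_of_ne' heq)
    simpa using hsnd.mul ((tendsto_rpow_nhdsGT hpos).comp tendsto_fst)

lemma tendsto_taylorPoly_blowup_div (hM : 0 < M) {G : smoothFn (ℝ × ℝ)} (hG : WeightGE M β G)
    {N : ℕ} (hN : β ≤ N * min 1 M) :
    Tendsto (fun z => taylorPoly N G (blowup M z) / z.1 ^ β) (𝓝[>] 0 ×ˢ 𝓝 r)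
      (𝓝 (weightPart M β G (1, r))) := by
  have hlevel : weightLevel M β =
      (Finset.range (N + 1) ×ˢ Finset.range (N + 1)).filter fun q => (q.1 : ℝ) + M * q.2 = β := by
    ext ⟨a, b⟩
    rw [mem_weightLevel hM, Finset.mem_filter, iff_and_self]
    intro hq
    simp only [Finset.mem_product, Finset.mem_range, Nat.lt_succ_iff]
    have hN1 : β ≤ N * 1 := hN.trans (by gcongr; exact min_le_left 1 M)
    have hNM : β ≤ N * M := hN.trans (by gcongr; exact min_le_right 1 M)
    have ha : (a : ℝ) ≤ N := by nlinarith [mul_nonneg hM.le b.cast_nonneg]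
    have hb : (b : ℝ) ≤ N := by nlinarith [(a.cast_nonneg : (0 : ℝ) ≤ a)]
    exact_mod_cast And.intro ha hb
  simp only [weightPart_apply, hlevel, Finset.sum_filter, taylorPoly, Submodule.coe_sum,
    Submodule.coe_smul, Finset.sum_apply, Pi.smul_apply, smul_eq_mul, Finset.sum_div]
  refine tendsto_finsetSum _ fun q _ => ?_
  by_cases hc : taylorCoeff q.1 q.2 G = 0
  · simp [hc]
  · have hq : β ≤ q.1 + M * q.2 := not_lt.1 (mt (hG q.1 q.2) hc)
    simpa [mul_div_assoc] using
      (tendsto_smoothMonomial_blowup_div (r := r) hq).const_mul (taylorCoeff q.1 q.2 G)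

lemma isLittleO_sub_taylorPoly_blowup (hM : 0 < M) (G : smoothFn (ℝ × ℝ)) {N : ℕ}
    (hN : β ≤ N * min 1 M) :
    (fun z => (G - taylorPoly N G : smoothFn (ℝ × ℝ)) (blowup M z)) =o[𝓝[>] 0 ×ˢ 𝓝 r]
      fun z => z.1 ^ β := by
  have hpow : (fun z => ‖blowup M z‖ ^ N) =O[𝓝[>] 0 ×ˢ 𝓝 r] fun z => (z.1 ^ min 1 M) ^ N :=
    (isBigO_blowup M).norm_left.pow N
  have hrpow : (fun z : ℝ × ℝ => (z.1 ^ min 1 M) ^ N) =ᶠ[𝓝[>] 0 ×ˢ 𝓝 r]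
      fun z => z.1 ^ (N * min 1 M) := by
    filter_upwards [eventually_fst_pos] with z hz
    rw [mul_comm, Real.rpow_mul_natCast hz.le]
  exact ((isLittleO_sub_taylorPoly G N).comp_tendsto (tendsto_blowup hM)).trans_isBigO
    ((hpow.trans_eventuallyEq hrpow).trans ((isBigO_rpow_rpow_nhdsGT hN).comp_tendsto tendsto_fst))

lemma WeightGE.tendsto_blowup_div (hM : 0 < M) {G : smoothFn (ℝ × ℝ)} (hG : WeightGE M β G) :
    Tendsto (fun z => G (blowup M z) / z.1 ^ β) (𝓝[>] 0 ×ˢ 𝓝 r)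
      (𝓝 (weightPart M β G (1, r))) := by
  obtain ⟨N, hN⟩ := exists_nat_ge (β / min 1 M)
  rw [div_le_iff₀ (lt_min one_pos hM)] at hN
  have hrem := (isLittleO_sub_taylorPoly_blowup (r := r) hM G hN).tendsto_div_nhds_zero
  simpa [← add_div] using hrem.add (tendsto_taylorPoly_blowup_div (r := r) hM hG hN)

lemma WeightGE.isLittleO_blowup (hM : 0 < M) {G : smoothFn (ℝ × ℝ)} (hG : WeightGE M β G)
    (hW : weightPart M β G (1, r) = 0) :
    (fun z => G (blowup M z)) =o[𝓝[>] 0 ×ˢ 𝓝 r] fun z => z.1 ^ β := by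
  refine (Asymptotics.isLittleO_iff_tendsto' ?_).2 (hW ▸ hG.tendsto_blowup_div hM)
  filter_upwards [eventually_fst_pos] with z hz hzero
  exact absurd hzero (Real.rpow_pos_of_pos hz β).ne'

end WeightedBlowup

section Shear

lemma isBigO_pow_of_iteratedDeriv_eq_zero {φ : ℝ → ℝ} {n : ℕ} (hφ : ContDiff ℝ n φ)
    (h : ∀ k < n, iteratedDeriv k φ 0 = 0) : φ =O[𝓝 0] fun x => x ^ n := by
  have htaylor (x : ℝ) :
      taylorWithinEval φ n univ 0 x = (n.factorial : ℝ)⁻¹ * x ^ n * iteratedDeriv n φ 0 := by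
    rw [taylor_within_apply, Finset.sum_range_succ, Finset.sum_eq_zero, zero_add]
    · simp [iteratedDerivWithin_univ]
    · intro k hk
      simp [iteratedDerivWithin_univ, h k (Finset.mem_range.1 hk)]
  have hrem := (taylor_isLittleO_univ (x₀ := 0) hφ).isBigO
  have hmain : taylorWithinEval φ n univ 0 =O[𝓝 0] fun x => x ^ n := by
    simp only [funext htaylor, mul_comm _ (iteratedDeriv n φ 0), ← mul_assoc]
    exact (Asymptotics.isBigO_refl _ _).const_mul_left _
  simpa using! (hrem.trans (by simpa using Asymptotics.isBigO_refl _ _)).add hmain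

lemma isBigO_iteratedDeriv_of_eq_zero {φ : ℝ → ℝ} (hφ : ContDiff ℝ (⊤ : ℕ∞) φ) {M : ℝ}
    (h : ∀ j : ℕ, (j : ℝ) < M → iteratedDeriv j φ 0 = 0) (i : ℕ) :
    iteratedDeriv i φ =O[𝓝[>] 0] fun x => x ^ (M - i) := by
  have hsmooth : ContDiff ℝ (⌈M⌉₊ - i : ℕ) (iteratedDeriv i φ) := by
    rw [iteratedDeriv_eq_iterate]
    exact contDiff_infty.1 (hφ.iterate_deriv i) _
  have hpow := isBigO_pow_of_iteratedDeriv_eq_zero hsmooth fun k hk => by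
    rw [iteratedDeriv_eq_iterate, iteratedDeriv_eq_iterate, ← Function.iterate_add_apply,
      ← iteratedDeriv_eq_iterate]
    exact h _ (Nat.lt_ceil.1 (by lia))
  have hle : M - i ≤ (⌈M⌉₊ - i : ℕ) := by
    rw [sub_le_iff_le_add]
    exact (Nat.le_ceil M).trans (mod_cast le_tsub_add)
  refine (hpow.mono nhdsWithin_le_nhds).trans ?_
  simpa using isBigO_rpow_rpow_nhdsGT hle

/-- The composition of `G` with the shear `(x, y) ↦ (x, y + φ x)`. -/
def shear (φ : smoothFn ℝ) (G : smoothFn (ℝ × ℝ)) : smoothFn (ℝ × ℝ) :=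
  ⟨fun p => G (p.1, p.2 + φ p.1), (smoothFn.contDiff G).comp
    (contDiff_fst.prodMk (contDiff_snd.add ((smoothFn.contDiff φ).comp contDiff_fst)))⟩

variable (φ : smoothFn ℝ) (G : smoothFn (ℝ × ℝ))

lemma shear_apply (x y : ℝ) : shear φ G (x, y) = G (x, y + φ x) := rfl

lemma shear_neg_shear : shear (-φ) (shear φ G) = G := by
  ext ⟨x, y⟩
  simp [shear_apply]

lemma dX_shear (x y : ℝ) :
    dX (shear φ G) (x, y) = shear φ (dX G) (x, y) + deriv φ x * shear φ (dY G) (x, y) := by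
  have hφ := (smoothFn.differentiable φ x).hasDerivAt
  have hchain := hasDerivAt_smoothFn_comp G ((hasDerivAt_id x).prodMk (hφ.const_add y))
  rw [(hasDerivAt_dX (shear φ G) x y).unique hchain, dirDeriv_apply, fderiv_apply_eq_partials]
  simp [shear_apply]

lemma dX_dX_shear (x y : ℝ) :
    dX (dX (shear φ G)) (x, y) = shear φ (dX (dX G)) (x, y) +
      2 * (deriv φ x * shear φ (dX (dY G)) (x, y)) +
      deriv φ x ^ 2 * shear φ (dY (dY G)) (x, y) +
      iteratedDeriv 2 φ x * shear φ (dY G) (x, y) := by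
  have hφ : HasDerivAt (deriv φ) (iteratedDeriv 2 φ x) x := by
    rw [iteratedDeriv_succ, iteratedDeriv_one]
    exact (((smoothFn.contDiff φ).iterate_deriv 1).differentiable (by simp) x).hasDerivAt
  have hleft := hasDerivAt_dX (dX (shear φ G)) x y
  simp only [dX_shear] at hleft
  rw [hleft.unique ((hasDerivAt_dX (shear φ (dX G)) x y).add
    (hφ.mul (hasDerivAt_dX (shear φ (dY G)) x y))), dX_shear, dX_shear, dY_dX]
  ring

variable {φ G}

lemma shear_zero (hφ : φ 0 = 0) : shear φ G 0 = G 0 := by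
  rw [← Prod.mk_zero_zero, shear_apply, hφ, add_zero]

lemma dX_shear_zero (hφ : φ 0 = 0) (hG : fderiv ℝ G 0 = 0) : dX (shear φ G) 0 = 0 := by
  rw [← Prod.mk_zero_zero, dX_shear, Prod.mk_zero_zero, shear_zero hφ, shear_zero hφ]
  simp [dirDeriv_apply, hG]

variable {M β r : ℝ}

lemma isLittleO_mul_fst_rpow {a b c : ℝ} {u v : ℝ × ℝ → ℝ} (habc : a + b = c)
    (hu : u =O[𝓝[>] 0 ×ˢ 𝓝 r] fun z => z.1 ^ a) (hv : v =o[𝓝[>] 0 ×ˢ 𝓝 r] fun z => z.1 ^ b) :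
    (fun z => u z * v z) =o[𝓝[>] 0 ×ˢ 𝓝 r] fun z => z.1 ^ c := by
  refine (hu.mul_isLittleO hv).trans_eventuallyEq ?_
  filter_upwards [eventually_fst_pos] with z hz
  rw [← Real.rpow_add hz, habc]

lemma tendsto_dX_dX_shear_div (hM : 0 < M)
    (hφ : ∀ j : ℕ, (j : ℝ) < M → iteratedDeriv j φ 0 = 0) (hG : WeightGE M β G)
    (hY : dY (weightPart M β G) (1, r) = 0) (hYY : dY (dY (weightPart M β G)) (1, r) = 0) :
    Tendsto (fun z => dX (dX (shear φ G)) (z.1, z.2 * z.1 ^ M - φ z.1) / z.1 ^ (β - 2))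
      (𝓝[>] 0 ×ˢ 𝓝 r) (𝓝 (β * (β - 1) * weightPart M β G (1, r))) := by
  have hφ' (i : ℕ) : (fun z : ℝ × ℝ => iteratedDeriv i φ z.1) =O[𝓝[>] 0 ×ˢ 𝓝 r]
      fun z => z.1 ^ (M - i) :=
    (isBigO_iteratedDeriv_of_eq_zero (smoothFn.contDiff φ) hφ i).comp_tendsto tendsto_fst
  have hXX := hG.dX.dX.tendsto_blowup_div (r := r) hM
  have hXY := hG.dY.dX.isLittleO_blowup (r := r) hM
    (by rw [← dX_weightPart hM, ← dY_weightPart hM, dX_dY_weightPart_eq_zero G hY hM hYY])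
  have hYY' := hG.dY.dY.isLittleO_blowup (r := r) hM
    (by rw [← dY_weightPart hM, ← dY_weightPart hM, hYY])
  have hY' := hG.dY.isLittleO_blowup (r := r) hM (by rw [← dY_weightPart hM, hY])
  rw [← dX_weightPart hM, ← dX_weightPart hM, dX_dX_weightPart_eq G hY hM hYY] at hXX
  have h1 := isLittleO_mul_fst_rpow (c := β - 2) (by push_cast; ring) (hφ' 1) hXY
  have h2 := isLittleO_mul_fst_rpow (c := β - 2) (by push_cast; ring) (hφ' 1)
    (isLittleO_mul_fst_rpow (c := β - M - 1) (by push_cast; ring) (hφ' 1) hYY')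
  have h3 := isLittleO_mul_fst_rpow (c := β - 2) (by push_cast; ring) (hφ' 2) hY'
  have herr := ((h1.const_mul_left 2).add h2).add h3
  convert hXX.add herr.tendsto_div_nhds_zero using 2 with z
  · simp only [dX_dX_shear, shear_apply, sub_add_cancel, blowup, iteratedDeriv_one]
    ring_nf
  · simp

lemma exists_eventually_le_abs_dX_dX_shear (hM : 0 < M)
    (hφ : ∀ j : ℕ, (j : ℝ) < M → iteratedDeriv j φ 0 = 0) (hG : WeightGE M β G)
    (hW : weightPart M β G (1, r) ≠ 0) (hY : dY (weightPart M β G) (1, r) = 0)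
    (hYY : dY (dY (weightPart M β G)) (1, r) = 0) (h0 : G 0 = 0) (hX0 : dX G 0 = 0) :
    ∃ C > 0, ∀ᶠ z in 𝓝[>] 0 ×ˢ 𝓝 r,
      C * z.1 ^ (β - 2) ≤ |dX (dX (shear φ G)) (z.1, z.2 * z.1 ^ M - φ z.1)| := by
  have hL : 0 < |β * (β - 1) * weightPart M β G (1, r)| :=
    abs_pos.2 (mul_ne_zero (weight_mul_sub_one_ne_zero G hY hM hW h0 hX0) hW)
  have hlim := (tendsto_dX_dX_shear_div hM hφ hG hY hYY).abs
  refine ⟨_, half_pos hL, ?_⟩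
  filter_upwards [hlim.eventually_const_lt (half_lt_self hL), eventually_fst_pos] with z hlt hz
  rw [abs_div, Real.abs_rpow_of_nonneg hz.le, abs_of_pos hz,
    lt_div_iff₀ (Real.rpow_pos_of_pos hz _)] at hlt
  exact hlt.le

end Shear

section LocalData

lemma pderiv2_congr {f g : ℝ → ℝ → ℝ} {x y : ℝ} (h : f.uncurry =ᶠ[𝓝 (x, y)] g.uncurry)
    (a b : ℕ) : pderiv2 f a b x y = pderiv2 g a b x y := by
  rw [nhds_prod_eq] at h
  refine Filter.EventuallyEq.iteratedDeriv_eq a ?_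
  filter_upwards [h.curry] with x' hx'
  exact Filter.EventuallyEq.iteratedDeriv_eq b hx'

lemma tcoeff_congr {f g : ℝ → ℝ → ℝ} (h : f.uncurry =ᶠ[𝓝 0] g.uncurry) :
    tcoeff f = tcoeff g := by
  funext a b
  rw [tcoeff, tcoeff, pderiv2_congr h]

lemma alphaM_congr {f g : ℝ → ℝ → ℝ} (h : tcoeff f = tcoeff g) : alphaM f = alphaM g := by
  funext M
  simp only [alphaM, tsupp, h]

lemma RMpart_congr {f g : ℝ → ℝ → ℝ} (h : tcoeff f = tcoeff g) : RMpart f = RMpart g := by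
  funext M x y
  simp only [RMpart, alphaM_congr h, tsupp, h]

lemma exists_forall_sliver {P : ℝ × ℝ → Prop} {φ : ℝ → ℝ} {M r : ℝ}
    (h : ∀ᶠ z in 𝓝[>] 0 ×ˢ 𝓝 r, P (z.1, z.2 * z.1 ^ M + φ z.1)) :
    ∃ μ > 0, ∃ ν > 0, ∀ x y : ℝ, 0 < x → x < μ → |y - φ x - r * x ^ M| < ν * x ^ M → P (x, y) := by
  obtain ⟨p, hp, q, hq, hpq⟩ := eventually_prod_iff.1 h
  obtain ⟨μ, hμ, hμp⟩ := mem_nhdsGT_iff_exists_Ioo_subset.1 hp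
  obtain ⟨ν, hν, hνq⟩ := Metric.eventually_nhds_iff.1 hq
  refine ⟨μ, hμ, ν, hν, fun x y hx hxμ hxy => ?_⟩
  have hxM : 0 < x ^ M := Real.rpow_pos_of_pos hx M
  have ht : dist ((y - φ x) / x ^ M) r < ν := by
    rwa [Real.dist_eq, div_sub' hxM.ne', abs_div, abs_of_pos hxM, div_lt_iff₀ hxM, mul_comm (x ^ M)]
  simpa [div_mul_cancel₀ _ hxM.ne'] using hpq (hμp ⟨hx, hxμ⟩) (hνq ht)

variable {M r : ℝ} {φ : smoothFn ℝ} {g : smoothFn (ℝ × ℝ)}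

lemma tendsto_shear (hφ : φ 0 = 0) :
    Tendsto (fun p : ℝ × ℝ => (p.1, p.2 + φ p.1)) (𝓝 0) (𝓝 0) := by
  have hcont : Continuous φ := (smoothFn.contDiff φ).continuous
  have hcont' : Continuous fun p : ℝ × ℝ => (p.1, p.2 + φ p.1) := by fun_prop
  convert hcont'.tendsto 0
  simp [hφ]

lemma exists_eventually_le_abs_pderiv2_curry (hM : 0 < M)
    (hφ : ∀ j : ℕ, (j : ℝ) < M → iteratedDeriv j φ 0 = 0) (h0 : g 0 = 0)
    (hgrad : fderiv ℝ g 0 = 0)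
    (hR : RMpart (shear φ g : ℝ × ℝ → ℝ).curry M 1 r ≠ 0)
    (hR1 : deriv (RMpart (shear φ g : ℝ × ℝ → ℝ).curry M 1) r = 0)
    (hR2 : iteratedDeriv 2 (RMpart (shear φ g : ℝ × ℝ → ℝ).curry M 1) r = 0) :
    ∃ C > 0, ∀ᶠ z in 𝓝[>] 0 ×ˢ 𝓝 r, C * z.1 ^ (alphaM (shear φ g : ℝ × ℝ → ℝ).curry M - 2) ≤
      |pderiv2 (g : ℝ × ℝ → ℝ).curry 2 0 z.1 (z.2 * z.1 ^ M + φ z.1)| := by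
  have hφ0 : φ 0 = 0 := by simpa using hφ 0 (by simpa using hM)
  rw [RMpart_curry hM] at hR
  rw [deriv_RMpart_curry hM] at hR1
  rw [iteratedDeriv_two_RMpart_curry hM] at hR2
  have hneg (j : ℕ) (hj : (j : ℝ) < M) : iteratedDeriv j (-φ : smoothFn ℝ) 0 = 0 := by
    simpa using hφ j hj
  obtain ⟨C, hC, h⟩ := exists_eventually_le_abs_dX_dX_shear hM hneg
    (weightGE_alphaM hM (shear φ g)) hR hR1 hR2 ((shear_zero hφ0).trans h0)
    (dX_shear_zero hφ0 hgrad)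
  refine ⟨C, hC, h.mono fun z hz => ?_⟩
  rw [shear_neg_shear] at hz
  simpa [pderiv2_curry, pow_two] using hz

end LocalData

theorem stmt_5_general (f : ℝ → ℝ → ℝ) (U₀ : Set (ℝ × ℝ)) (hU₀ : U₀ ∈ 𝓝 ((0 : ℝ), (0 : ℝ)))
    (hsm : ContDiffOn ℝ (⊤ : ℕ∞) (fun p : ℝ × ℝ => f p.1 p.2) U₀)
    (h0 : f 0 0 = 0) (hgrad : fderiv ℝ (fun p : ℝ × ℝ => f p.1 p.2) (0, 0) = 0)
    (ψ : ℝ → ℝ) (hψ : ContDiff ℝ (⊤ : ℕ∞) ψ) (M : ℝ) (hM : 0 < M)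
    (hψ0 : ∀ j : ℕ, (j : ℝ) < M → iteratedDeriv j ψ 0 = 0)
    (F : ℝ → ℝ → ℝ) (hF : ∀ x y, F x y = f x (y + ψ x)) (r : ℝ)
    (hFM : RMpart F M 1 r ≠ 0)
    (hFM1 : deriv (fun y => RMpart F M 1 y) r = 0)
    (hFM2 : iteratedDeriv 2 (fun y => RMpart F M 1 y) r = 0) :
    ∃ C > (0 : ℝ), ∃ μ > (0 : ℝ), ∃ ν > (0 : ℝ), ∀ x y : ℝ,
      0 < x → x < μ → |y - ψ x - r * x ^ M| < ν * x ^ M →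
      C * x ^ (alphaM F M - 2) ≤ |pderiv2 f 2 0 x y| := by
  obtain ⟨g, hfg⟩ := exists_smoothFn_eventuallyEq hU₀ hsm
  let φ : smoothFn ℝ := ⟨ψ, hψ⟩
  have hshear := tendsto_shear (φ := φ) (by simpa using hψ0 0 (by simpa using hM))
  have hcoeff : tcoeff F = tcoeff (shear φ g : ℝ × ℝ → ℝ).curry := by
    refine tcoeff_congr ((hshear.eventually hfg).mono fun p hp => ?_)
    exact (hF p.1 p.2).trans hp
  rw [RMpart_congr hcoeff] at hFM hFM1 hFM2
  obtain ⟨C, hC, hbound⟩ := exists_eventually_le_abs_pderiv2_curry hM hψ0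
    (hfg.self_of_nhds.symm.trans h0) (hfg.fderiv_eq.symm.trans hgrad) hFM hFM1 hFM2
  have hnear : ∀ᶠ z in 𝓝[>] 0 ×ˢ 𝓝 r, f.uncurry =ᶠ[𝓝 (z.1, z.2 * z.1 ^ M + ψ z.1)] g :=
    (hshear.comp (tendsto_blowup hM)).eventually hfg.eventually_nhds
  refine ⟨C, hC, exists_forall_sliver
    (P := fun p => C * p.1 ^ (alphaM F M - 2) ≤ |pderiv2 f 2 0 p.1 p.2|) ?_⟩
  filter_upwards [hbound, hnear] with z hz hfgz
  rwa [alphaM_congr hcoeff, pderiv2_congr (g := (g : ℝ × ℝ → ℝ).curry) hfgz]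

/-- Lemma 2.4: on the sliver `E''` (in the original coordinates), the second `x`-derivative
of `f` is bounded below by `C x^{α-2}`. -/
theorem stmt_5 (f : ℝ → ℝ → ℝ) (U₀ : Set (ℝ × ℝ)) (hU₀ : U₀ ∈ 𝓝 ((0 : ℝ), (0 : ℝ)))
    (hsm : ContDiffOn ℝ (⊤ : ℕ∞) (fun p : ℝ × ℝ => f p.1 p.2) U₀)
    (h0 : f 0 0 = 0) (hgrad : fderiv ℝ (fun p : ℝ × ℝ => f p.1 p.2) (0, 0) = 0)
    (ψ : ℝ → ℝ) (hψ : ContDiff ℝ (⊤ : ℕ∞) ψ) (M : ℝ) (hM : 1 ≤ M)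
    (hψ0 : ∀ j : ℕ, (j : ℝ) < M → iteratedDeriv j ψ 0 = 0)
    (F : ℝ → ℝ → ℝ) (hF : ∀ x y, F x y = f x (y + ψ x))
    (r : ℝ) (hr : r ≠ 0)
    (hFM : RMpart F M 1 r ≠ 0)
    (hFM1 : deriv (fun y => RMpart F M 1 y) r = 0)
    (hFM2 : iteratedDeriv 2 (fun y => RMpart F M 1 y) r = 0) :
    ∃ C > (0 : ℝ), ∃ μ > (0 : ℝ), ∃ ν > (0 : ℝ), ∀ x y : ℝ,
      0 < x → x < μ → |y - ψ x - r * x ^ M| < ν * x ^ M →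
      C * x ^ (alphaM F M - 2) ≤ |pderiv2 f 2 0 x y| :=
  stmt_5_general f U₀ hU₀ hsm h0 hgrad ψ hψ M (zero_lt_one.trans_le hM) hψ0 F hF r hFM hFM1 hFM2

end
end
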